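/- arXiv:2502.20958 — 3 statements merged into one kernel-verified Lean document; each statement's English description precedes it below -/
import Mathlib

section
/- For every Lyndon word l, one has [l] = l + Σ_w b_w w in T, where the sum runs over words w with ℓ(w) = ℓ(l) and w > l lexicographically, and all coefficients b_w lie in ℤ[q, q^{-1}]. -/
/-!
Write `l = l₁l₂` for the co-standard factorization. By induction on the length, `[l₁]` and `[l₂]`
are `l₁` and `l₂` plus larger words of the same length. Comparing words of equal length is
compatible with concatenation, so `[l₁][l₂]` is `l` plus larger words, while `[l₂][l₁]` only
involves words `≥ l₂l₁`; and `l₂l₁ > l₂ > l` because `l` is Lyndon. Hence the `q`-commutator is `l`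
plus larger words, whatever power of `q` it is twisted by.

The induction needs `l₂` to be Lyndon. Its smallest nonempty suffix `s` is Lyndon, and
`l₁ < l < s`, so `l₁s` is Lyndon. Suppose `s ≠ l₂`. If `s` is a prefix of `l₂`, then `l₁s` is a
Lyndon proper prefix of `l` longer than `l₁`. Otherwise `s = pc⋯` and `l₂ = pd⋯` with letters
`c < d`, and `l₁pd` is such a prefix: raising the last letter of a prefix of a Lyndon word gives a
Lyndon word. Either way `l₁` is not maximal.
-/

/-- The lexicographic order on words over the alphabet `v_0 < v_1 < ⋯ < v_{n-1}`
(indexed by `Fin n`), in which a word is smaller than any word having it as a proper prefix. -/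
def LexLt {n : ℕ} (x y : List (Fin n)) : Prop := List.Lex (· < ·) x y

/-- The order `≺` : `x ≺ y` iff `ℓ(x) < ℓ(y)`, or `ℓ(x) = ℓ(y)` and `x > y` lexicographically. -/
def PrecLt {n : ℕ} (x y : List (Fin n)) : Prop :=
  x.length < y.length ∨ (x.length = y.length ∧ LexLt y x)

/-- The order `≼` : `x ≼ y` iff `x ≺ y` or `x = y`. -/
def PrecLe {n : ℕ} (x y : List (Fin n)) : Prop := PrecLt x y ∨ x = y

/-- A nonempty word is Lyndon if it is lexicographically strictly smaller than every proper
nonempty suffix of itself. -/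
def IsLyndon {n : ℕ} (l : List (Fin n)) : Prop :=
  l ≠ [] ∧ ∀ k : ℕ, 0 < k → k < l.length → LexLt l (l.drop k)

/-- The bilinear pairing `(|x|, |y|)` of the `ℕΠ`-degrees of two words, induced by the
symmetric matrix `M = ((α_i, α_j))_{i,j}`. -/
def wpair {n : ℕ} (M : Matrix (Fin n) (Fin n) ℤ) (x y : List (Fin n)) : ℤ :=
  (x.map (fun i => (y.map (fun j => M i j)).sum)).sum

/-- The monomial in the free algebra `T` over `ℤ[q,q⁻¹]` corresponding to a word. -/
noncomputable def monoT {n : ℕ} (w : List (Fin n)) :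
    FreeAlgebra (LaurentPolynomial ℤ) (Fin n) :=
  (w.map (FreeAlgebra.ι (LaurentPolynomial ℤ))).prod

open scoped Classical in
/-- The `q⁻¹`-bracketing `[l]` of a Lyndon word `l` : `[l] = l` when `ℓ(l) = 1` and
`[l] = [l₁][l₂] - q^{-(|l₁|,|l₂|)} [l₂][l₁]` where `l = l₁l₂` is the co-standard factorization,
`l₁` being the longest Lyndon proper prefix of `l`. -/
noncomputable def bracketT {n : ℕ} (M : Matrix (Fin n) (Fin n) ℤ) :
    List (Fin n) → FreeAlgebra (LaurentPolynomial ℤ) (Fin n)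
  | l =>
    if h : l.length ≤ 1 then monoT l
    else
      let k := max 1 (min (l.length - 1)
        (Nat.findGreatest (fun k => IsLyndon (l.take k)) (l.length - 1)))
      have hk1 : 1 ≤ k := le_max_left _ _
      have hk2 : k ≤ l.length - 1 := max_le (by omega) (min_le_left _ _)
      have h1 : (l.take k).length < l.length := by rw [List.length_take]; omega
      have h2 : (l.drop k).length < l.length := by rw [List.length_drop]; omega
      bracketT M (l.take k) * bracketT M (l.drop k) -
        LaurentPolynomial.T (R := ℤ) (-(wpair M (l.take k) (l.drop k))) •
          (bracketT M (l.drop k) * bracketT M (l.take k))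
  termination_by l => l.length
  decreasing_by all_goals assumption

section LexicographicOrder

variable {α : Type*} [LT α]

lemma lt_append_of_ne_nil (a : List α) {x : List α} (hx : x ≠ []) : a < a ++ x := by
  obtain ⟨i, x, rfl⟩ := List.exists_cons_of_ne_nil hx
  simpa using List.append_left_lt (l₁ := a) (List.nil_lt_cons i x)

lemma append_lt_append_of_lt_of_length_le :
    ∀ {a b : List α}, a < b → b.length ≤ a.length → ∀ x y, a ++ x < b ++ y
  | [], _ :: _, _, hlen, _, _ => absurd hlen (Nat.not_succ_le_zero _)
  | _ :: _, _ :: _, .rel h, _, _, _ => .rel h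
  | _ :: _, _ :: _, .cons h, hlen, x, y =>
    .cons (append_lt_append_of_lt_of_length_le h (Nat.le_of_succ_le_succ hlen) x y)

lemma append_cons_lt_append_cons (p : List α) {c d : α} (h : c < d) (r s : List α) :
    p ++ c :: r < p ++ d :: s :=
  List.append_left_lt (.rel h)

lemma prefix_or_exists_mismatch_of_lt :
    ∀ {a b : List α}, a < b →
      a <+: b ∨ ∃ p c d r s, a = p ++ c :: r ∧ b = p ++ d :: s ∧ c < d
  | [], _, _ => .inl List.nil_prefix
  | c :: r, d :: s, .rel h => .inr ⟨[], c, d, r, s, rfl, rfl, h⟩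
  | i :: _, _ :: _, .cons h => by
    rcases prefix_or_exists_mismatch_of_lt h with hpre | ⟨p, c, d, r, s, rfl, rfl, hcd⟩
    · exact .inl ((List.prefix_cons_inj i).2 hpre)
    · exact .inr ⟨i :: p, c, d, r, s, rfl, rfl, hcd⟩

end LexicographicOrder

section Lyndon

variable {n : ℕ} {a b l s v : List (Fin n)}

lemma isLyndon_iff_le_of_suffix :
    IsLyndon l ↔ l ≠ [] ∧ ∀ v, v <:+ l → v ≠ [] → l ≤ v := by
  refine and_congr_right fun _ => ⟨fun h v hv hv0 => ?_, fun h k hk hkl => ?_⟩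
  · rcases hv.length_le.eq_or_lt with hlen | hlen
    · exact (hv.eq_of_length hlen).ge
    · have hpos := List.length_pos_iff.2 hv0
      rw [List.suffix_iff_eq_drop.1 hv]
      exact le_of_lt (h (l.length - v.length) (by omega) (by omega))
  · refine lt_of_le_of_ne (h _ (List.drop_suffix k l) (by simpa using hkl)) fun heq => ?_
    have hlen := congrArg List.length heq
    rw [List.length_drop] at hlen
    omega

lemma isLyndon_singleton (i : Fin n) : IsLyndon [i] :=
  ⟨List.cons_ne_nil _ _, fun _ hk hk1 => absurd hk1 (not_lt_of_ge hk)⟩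

namespace IsLyndon

lemma le_of_suffix (hl : IsLyndon l) (hv : v <:+ l) (hv0 : v ≠ []) : l ≤ v :=
  (isLyndon_iff_le_of_suffix.1 hl).2 v hv hv0

lemma append_lt_right (hab : IsLyndon (a ++ b)) (ha : a ≠ []) (hb : b ≠ []) : a ++ b < b :=
  lt_of_le_of_ne (hab.le_of_suffix (List.suffix_append a b) hb) (by simpa using ha)

lemma append_lt_append_swap (hab : IsLyndon (a ++ b)) (ha : a ≠ []) (hb : b ≠ []) :
    a ++ b < b ++ a :=
  (hab.append_lt_right ha hb).trans (lt_append_of_ne_nil b ha)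

lemma append_lt_right_of_lt (hb : IsLyndon b) (ha : a ≠ []) (hab : a < b) : a ++ b < b := by
  rcases prefix_or_exists_mismatch_of_lt hab with ⟨z, rfl⟩ | ⟨p, c, d, r, s, rfl, rfl, hcd⟩
  · have hz : z ≠ [] := by rintro rfl; simp at hab
    exact List.append_left_lt (hb.append_lt_right ha hz)
  · rw [List.append_assoc]
    exact append_cons_lt_append_cons p hcd _ s

lemma append (ha : IsLyndon a) (hb : IsLyndon b) (hab : a < b) : IsLyndon (a ++ b) := by
  have hlt : a ++ b < b := hb.append_lt_right_of_lt ha.1 hab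
  refine isLyndon_iff_le_of_suffix.2 ⟨by simp [ha.1], fun v ⟨u, huv⟩ hv0 => ?_⟩
  rcases List.append_eq_append_iff.1 huv with ⟨w, rfl, rfl⟩ | ⟨w, rfl, rfl⟩
  · rcases eq_or_ne w [] with rfl | hw
    · exact hlt.le
    · have hsuff : w <:+ u ++ w := List.suffix_append u w
      rcases (ha.le_of_suffix hsuff hw).eq_or_lt with heq | haw
      · rw [heq]
      · exact (append_lt_append_of_lt_of_length_le haw hsuff.length_le b b).le
  · exact hlt.le.trans (hb.le_of_suffix (List.suffix_append w v) hv0)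

lemma concat_of_lt {x r : List (Fin n)} {c d : Fin n} (h : IsLyndon (x ++ c :: r))
    (hcd : c < d) : IsLyndon (x ++ [d]) := by
  refine isLyndon_iff_le_of_suffix.2 ⟨by simp, fun v hv hv0 => ?_⟩
  obtain rfl | ⟨t, rfl, ht⟩ := List.suffix_concat_iff.1 hv
  · exact absurd rfl hv0
  rcases ht.length_le.eq_or_lt with hlen | hlen
  · rw [ht.eq_of_length hlen]
  have hsuff : t ++ c :: r <:+ x ++ c :: r :=
    (List.suffix_append_inj_of_length_eq rfl).2 ⟨ht, rfl⟩
  have hx : x < t ++ [d] := calc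
    x < x ++ c :: r := lt_append_of_ne_nil x (List.cons_ne_nil c r)
    _ ≤ t ++ c :: r := h.le_of_suffix hsuff (by simp)
    _ < t ++ [d] := append_cons_lt_append_cons t hcd r []
  simpa using (append_lt_append_of_lt_of_length_le hx (by simpa using hlen) [d] []).le

end IsLyndon

lemma exists_isLyndon_suffix_le (hl : l ≠ []) : ∃ s, s <:+ l ∧ IsLyndon s ∧ s ≤ l := by
  have hmem (v : List (Fin n)) : v ∈ l.tails.toFinset.erase [] ↔ v ≠ [] ∧ v <:+ l := by simp
  obtain ⟨s, hs, hmin⟩ :=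
    Finset.exists_min_image (l.tails.toFinset.erase []) id ⟨l, (hmem l).2 ⟨hl, List.suffix_rfl⟩⟩
  obtain ⟨hs0, hsl⟩ := (hmem s).1 hs
  exact ⟨s, hsl,
    isLyndon_iff_le_of_suffix.2
      ⟨hs0, fun v hv hv0 => hmin v ((hmem v).2 ⟨hv0, hv.trans hsl⟩)⟩,
    hmin l ((hmem l).2 ⟨hl, List.suffix_rfl⟩)⟩

namespace IsLyndon

lemma exists_prefix_append (ha : IsLyndon a) (hs : IsLyndon s) (has : a < s) (hsb : s < b)
    (hlen : s.length < b.length) : ∃ p, p <+: b ∧ p ≠ [] ∧ p ≠ b ∧ IsLyndon (a ++ p) := by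
  have hLyndon : IsLyndon (a ++ s) := ha.append hs has
  rcases prefix_or_exists_mismatch_of_lt hsb with hpre | ⟨p, c, d, r, t, rfl, rfl, hcd⟩
  · exact ⟨s, hpre, hs.1, hsb.ne, hLyndon⟩
  · rw [← List.append_assoc] at hLyndon
    refine ⟨p ++ [d], ⟨t, by simp⟩, by simp, ?_, ?_⟩
    · intro heq
      simp only [← heq, List.length_append, List.length_cons, List.length_nil] at hlen
      omega
    · simpa using hLyndon.concat_of_lt hcd

lemma right_of_forall_prefix (hab : IsLyndon (a ++ b)) (ha : IsLyndon a) (hb : b ≠ [])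
    (hmax : ∀ p, p <+: b → p ≠ [] → p ≠ b → ¬ IsLyndon (a ++ p)) : IsLyndon b := by
  obtain ⟨s, hsuff, hs, hle⟩ := exists_isLyndon_suffix_le hb
  rcases hle.eq_or_lt with rfl | hsb
  · exact hs
  have has : a < s := calc
    a < a ++ b := lt_append_of_ne_nil a hb
    _ ≤ s := hab.le_of_suffix (hsuff.trans (List.suffix_append a b)) hs.1
  have hlen : s.length < b.length :=
    lt_of_le_of_ne hsuff.length_le fun h => hsb.ne (hsuff.eq_of_length h)
  obtain ⟨p, hp, hp0, hpb, hap⟩ := ha.exists_prefix_append hs has hsb hlen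
  exact absurd hap (hmax p hp hp0 hpb)

end IsLyndon

end Lyndon

section CostandardFactorization

variable {n : ℕ} {l : List (Fin n)}

open scoped Classical in
/-- The length of the left factor in the co-standard factorization of `l`, that is, of the longest
Lyndon proper prefix of `l`; it is `0` if `l` has at most one letter. -/
noncomputable def costandardCut (l : List (Fin n)) : ℕ :=
  Nat.findGreatest (fun k => IsLyndon (l.take k)) (l.length - 1)

lemma le_costandardCut {k : ℕ} (hk : k < l.length) (hl : IsLyndon (l.take k)) :
    k ≤ costandardCut l := by
  classical
  exact Nat.le_findGreatest (Nat.le_sub_one_of_lt hk) hl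

lemma costandardCut_lt_length (hl : l ≠ []) : costandardCut l < l.length := by
  classical
  have hle : costandardCut l ≤ l.length - 1 := Nat.findGreatest_le _
  have hpos := List.length_pos_iff.2 hl
  omega

lemma isLyndon_take_one (hl : l ≠ []) : IsLyndon (l.take 1) := by
  obtain ⟨i, l, rfl⟩ := List.exists_cons_of_ne_nil hl
  exact isLyndon_singleton i

lemma costandardCut_pos (hl : 1 < l.length) : 0 < costandardCut l :=
  le_costandardCut hl (isLyndon_take_one (List.ne_nil_of_length_pos (by omega)))

lemma isLyndon_take_costandardCut (hl : 1 < l.length) : IsLyndon (l.take (costandardCut l)) := by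
  classical
  exact Nat.findGreatest_of_ne_zero (P := fun k => IsLyndon (l.take k)) rfl
    (costandardCut_pos hl).ne'

lemma IsLyndon.drop_costandardCut (hl : IsLyndon l) (hlen : 1 < l.length) :
    IsLyndon (l.drop (costandardCut l)) := by
  refine right_of_forall_prefix (by rwa [List.take_append_drop])
    (isLyndon_take_costandardCut hlen) (by simpa using costandardCut_lt_length hl.1)
    fun p hp hp0 hpne hLyndon => ?_
  have hpos := List.length_pos_iff.2 hp0
  have hplen : p.length < (l.drop (costandardCut l)).length :=
    lt_of_le_of_ne hp.length_le fun h => hpne (hp.eq_of_length h)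
  rw [List.length_drop] at hplen
  have htake : l.take (costandardCut l + p.length) = l.take (costandardCut l) ++ p := by
    rw [List.take_add, ← List.prefix_iff_eq_take.1 hp]
  have hle := le_costandardCut (by omega) (htake ▸ hLyndon)
  omega

lemma bracketT_of_length_le_one (M : Matrix (Fin n) (Fin n) ℤ) (hl : l.length ≤ 1) :
    bracketT M l = monoT l := by
  rw [bracketT, dif_pos hl]

lemma bracketT_of_one_lt_length (M : Matrix (Fin n) (Fin n) ℤ) (hl : 1 < l.length) :
    bracketT M l =
      bracketT M (l.take (costandardCut l)) * bracketT M (l.drop (costandardCut l)) -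
        LaurentPolynomial.T (R := ℤ)
            (-(wpair M (l.take (costandardCut l)) (l.drop (costandardCut l)))) •
          (bracketT M (l.drop (costandardCut l)) * bracketT M (l.take (costandardCut l))) := by
  have hcut : max 1 (min (l.length - 1) (costandardCut l)) = costandardCut l := by
    have hpos := costandardCut_pos hl
    have hlt := costandardCut_lt_length (l := l) (List.ne_nil_of_length_pos (by omega))
    omega
  rw [costandardCut] at hcut
  rw [bracketT, dif_neg hl.not_ge]
  simp only [hcut, costandardCut]

end CostandardFactorization

section LeadingWord

variable {n : ℕ} {S S' U : Set (List (Fin n))} {a b l l' w : List (Fin n)}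
  {x y : FreeAlgebra (LaurentPolynomial ℤ) (Fin n)}

lemma monoT_append (a b : List (Fin n)) : monoT (a ++ b) = monoT a * monoT b := by
  simp [monoT]

/-- The `ℤ[q,q⁻¹]`-submodule of `T` spanned by the words in `S`. -/
noncomputable def wordSpan (S : Set (List (Fin n))) :
    Submodule (LaurentPolynomial ℤ) (FreeAlgebra (LaurentPolynomial ℤ) (Fin n)) :=
  Submodule.span _ (monoT '' S)

lemma monoT_mem_wordSpan (hw : w ∈ S) : monoT w ∈ wordSpan S :=
  Submodule.subset_span (Set.mem_image_of_mem _ hw)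

lemma wordSpan_mono (h : S ⊆ S') : wordSpan S ≤ wordSpan S' :=
  Submodule.span_mono (Set.image_mono h)

lemma mul_mem_wordSpan (hx : x ∈ wordSpan S) (hy : y ∈ wordSpan S')
    (h : ∀ u ∈ S, ∀ v ∈ S', u ++ v ∈ U) : x * y ∈ wordSpan U := by
  have hxy := Submodule.mul_mem_mul hx hy
  rw [wordSpan, wordSpan, Submodule.span_mul_span] at hxy
  refine Submodule.span_mono ?_ hxy
  rintro _ ⟨_, ⟨u, hu, rfl⟩, _, ⟨v, hv, rfl⟩, rfl⟩
  exact ⟨u ++ v, h u hu v hv, monoT_append u v⟩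

lemma exists_sum_of_mem_wordSpan (hx : x ∈ wordSpan S) :
    ∃ (s : Finset (List (Fin n))) (c : List (Fin n) → LaurentPolynomial ℤ),
      (∀ w ∈ s, w ∈ S) ∧ x = ∑ w ∈ s, c w • monoT w := by
  obtain ⟨c, hc, hsum⟩ := (Finsupp.mem_span_image_iff_linearCombination _).1 hx
  exact ⟨c.support, c, fun _ hw => hc hw, hsum.symm⟩

/-- The words of the same length as `l` that are lexicographically larger than `l`. -/
def wordsAbove (l : List (Fin n)) : Set (List (Fin n)) :=
  {w | w.length = l.length ∧ l < w}

lemma append_mem_wordsAbove_of_left (ha : w ∈ wordsAbove a) (hb : l.length = b.length) :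
    w ++ l ∈ wordsAbove (a ++ b) :=
  ⟨by simp [ha.1, hb], append_lt_append_of_lt_of_length_le ha.2 ha.1.le b l⟩

lemma append_mem_wordsAbove_of_right (a : List (Fin n)) (hb : w ∈ wordsAbove b) :
    a ++ w ∈ wordsAbove (a ++ b) :=
  ⟨by simp [hb.1], List.append_left_lt hb.2⟩

/-- `x` is `l` plus a linear combination of words of the same length as `l` and lexicographically
larger than `l`: the leading word is thus the smallest one, and its coefficient is `1`. -/
def HasLeadingWord (x : FreeAlgebra (LaurentPolynomial ℤ) (Fin n)) (l : List (Fin n)) : Prop :=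
  x - monoT l ∈ wordSpan (wordsAbove l)

lemma hasLeadingWord_monoT (l : List (Fin n)) : HasLeadingWord (monoT l) l := by
  rw [HasLeadingWord, sub_self]
  exact zero_mem _

namespace HasLeadingWord

lemma mul (hx : HasLeadingWord x a) (hy : HasLeadingWord y b) :
    HasLeadingWord (x * y) (a ++ b) := by
  have hexpand : x * y - monoT (a ++ b) =
      (x - monoT a) * (y - monoT b) + (x - monoT a) * monoT b + monoT a * (y - monoT b) := by
    simp only [monoT_append, mul_sub, sub_mul]
    abel
  have ha : monoT a ∈ wordSpan {a} := monoT_mem_wordSpan rfl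
  have hb : monoT b ∈ wordSpan {b} := monoT_mem_wordSpan rfl
  rw [HasLeadingWord, hexpand]
  refine add_mem (add_mem (mul_mem_wordSpan hx hy fun u hu v hv => ?_)
    (mul_mem_wordSpan hx hb fun u hu v hv => ?_)) (mul_mem_wordSpan ha hy fun u hu v hv => ?_)
  · exact append_mem_wordsAbove_of_left hu hv.1
  · exact append_mem_wordsAbove_of_left hu (congrArg List.length hv)
  · obtain rfl : u = a := hu
    exact append_mem_wordsAbove_of_right u hv

lemma mem_wordSpan_wordsAbove (hx : HasLeadingWord x l) (hl : l ∈ wordsAbove l') :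
    x ∈ wordSpan (wordsAbove l') := by
  have hsub : wordsAbove l ⊆ wordsAbove l' := fun _ hw => ⟨hw.1.trans hl.1, hl.2.trans hw.2⟩
  simpa using add_mem (wordSpan_mono hsub hx) (monoT_mem_wordSpan hl)

lemma mul_sub_smul_mul (hx : HasLeadingWord x a) (hy : HasLeadingWord y b)
    (hab : a ++ b < b ++ a) (t : LaurentPolynomial ℤ) :
    HasLeadingWord (x * y - t • (y * x)) (a ++ b) := by
  have hyx : y * x ∈ wordSpan (wordsAbove (a ++ b)) :=
    (hy.mul hx).mem_wordSpan_wordsAbove ⟨by simp [add_comm], hab⟩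
  rw [HasLeadingWord, sub_right_comm]
  exact sub_mem (hx.mul hy) (Submodule.smul_mem _ t hyx)

end HasLeadingWord

lemma IsLyndon.hasLeadingWord_bracketT (M : Matrix (Fin n) (Fin n) ℤ) {l : List (Fin n)}
    (hl : IsLyndon l) : HasLeadingWord (bracketT M l) l := by
  rcases le_or_gt l.length 1 with h1 | h1
  · rw [bracketT_of_length_le_one M h1]
    exact hasLeadingWord_monoT l
  have hleft : IsLyndon (l.take (costandardCut l)) := isLyndon_take_costandardCut h1
  have hright : IsLyndon (l.drop (costandardCut l)) := hl.drop_costandardCut h1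
  have hswap := append_lt_append_swap
    (by rwa [List.take_append_drop (costandardCut l) l]) hleft.1 hright.1
  rw [bracketT_of_one_lt_length M h1]
  simpa only [List.take_append_drop] using (hleft.hasLeadingWord_bracketT M).mul_sub_smul_mul
    (hright.hasLeadingWord_bracketT M) hswap _
termination_by l.length
decreasing_by
  · simpa using costandardCut_lt_length hl.1
  · simpa using ⟨Nat.zero_lt_of_lt h1, costandardCut_pos h1⟩

end LeadingWord

theorem bracket_triangular_general {n : ℕ} (M : Matrix (Fin n) (Fin n) ℤ)
    (l : List (Fin n)) (hl : IsLyndon l) :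
    ∃ (s : Finset (List (Fin n))) (c : List (Fin n) → LaurentPolynomial ℤ),
      (∀ w ∈ s, w.length = l.length ∧ LexLt l w) ∧
      bracketT M l = monoT l + ∑ w ∈ s, c w • monoT w := by
  obtain ⟨s, c, hs, hsum⟩ := exists_sum_of_mem_wordSpan (hl.hasLeadingWord_bracketT M)
  exact ⟨s, c, hs, sub_eq_iff_eq_add'.1 hsum⟩

/-- For every Lyndon word `l`, `[l] = l + Σ b_w w` in `T`, the sum running over words `w` with
`ℓ(w) = ℓ(l)` and `w > l` lexicographically, with coefficients `b_w ∈ ℤ[q,q⁻¹]`. -/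
theorem bracket_triangular {n : ℕ} (M : Matrix (Fin n) (Fin n) ℤ)
    (hM : ∀ i j, M i j = M j i) (l : List (Fin n)) (hl : IsLyndon l) :
    ∃ (s : Finset (List (Fin n))) (c : List (Fin n) → LaurentPolynomial ℤ),
      (∀ w ∈ s, w.length = l.length ∧ LexLt l w) ∧
      bracketT M l = monoT l + ∑ w ∈ s, c w • monoT w :=
  bracket_triangular_general M l hl
end

section
/- Assume that every one-letter word is good. If l is a Lyndon word that is not good, then there exist Lyndon words l_1 and l_2, both good, with l_1 < l_2 lexicographically, such that the concatenation l_1 l_2 is not good and l_1 l_2 is a factor of l. -/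
/-- `B_w = b_{i_1} ⋯ b_{i_k} ∈ R` for the word `w = v_{i_1} ⋯ v_{i_k}` (`B_w = 1` for `w = []`). -/
def Bword {n : ℕ} {R : Type*} [Monoid R] (b : Fin n → R) (w : List (Fin n)) : R :=
  (w.map b).prod

/-- A word `g` is good if `B_g` does not lie in the `K`-linear span of the `B_w` with `w ≺ g`. -/
def IsGood (K : Type*) {n : ℕ} {R : Type*} [Field K] [Ring R] [Algebra K R]
    (b : Fin n → R) (g : List (Fin n)) : Prop :=
  Bword b g ∉ Submodule.span K (Bword b '' {w | PrecLt w g})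

theorem append_lt_append_of_lt_of_not_prefix {α : Type*} [LT α] {x y : List α} (hlt : x < y)
    (hpre : ¬ x <+: y) (p q : List α) : x ++ p < y ++ q := by
  induction hlt with
  | nil => exact absurd List.nil_prefix hpre
  | rel hab => exact List.Lex.rel hab
  | cons _ ih => exact List.Lex.cons (ih fun h => hpre (List.cons_prefix_cons.mpr ⟨rfl, h⟩))

/-- The suffixes of a word other than itself and the empty word. A Lyndon word that is not a letter
is split at the least of them. -/
def properSuffixes {α : Type*} (l : List α) : Set (List α) :=
  {v | v ≠ [] ∧ ∃ u, u ≠ [] ∧ u ++ v = l}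

section ProperSuffixes

variable {α : Type*}

theorem mem_properSuffixes_append {u v : List α} (hu : u ≠ []) (hv : v ≠ []) :
    v ∈ properSuffixes (u ++ v) :=
  ⟨hv, u, hu, rfl⟩

theorem properSuffixes_subset_of_mem {l v : List α} (hv : v ∈ properSuffixes l) :
    properSuffixes v ⊆ properSuffixes l := by
  obtain ⟨-, u, hu, rfl⟩ := hv
  rintro w ⟨hw, t, -, rfl⟩
  exact ⟨hw, u ++ t, by simp [hu], List.append_assoc u t w⟩

theorem notMem_properSuffixes_self (l : List α) : l ∉ properSuffixes l := by
  rintro ⟨-, u, hu, h⟩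
  exact hu (List.append_left_eq_self.mp h)

theorem finite_properSuffixes (l : List α) : (properSuffixes l).Finite := by
  refine l.tails.finite_toSet.subset ?_
  rintro v ⟨-, u, -, huv⟩
  exact (List.mem_tails v l).mpr ⟨u, huv⟩

theorem exists_isLeast_properSuffixes [LinearOrder α] {l : List α} (hlen : 1 < l.length) :
    ∃ v, IsLeast (properSuffixes l) v := by
  have hne : (properSuffixes l).Nonempty := by
    match l, hlen with
    | a :: c :: t, _ =>
      exact ⟨c :: t, mem_properSuffixes_append (List.cons_ne_nil a []) (List.cons_ne_nil c t)⟩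
  exact Set.exists_min_image _ id (finite_properSuffixes l) hne

end ProperSuffixes

/-- Lyndon words over an arbitrary ordered alphabet; for the alphabet `Fin n` this is `IsLyndon`
(`isLyndon_iff_isLyndonWord`). -/
def IsLyndonWord {α : Type*} [LT α] (l : List α) : Prop :=
  l ≠ [] ∧ ∀ v ∈ properSuffixes l, l < v

namespace IsLyndonWord

variable {α : Type*} [LinearOrder α] {l u v : List α}

theorem of_isLeast_properSuffixes (hv : IsLeast (properSuffixes l) v) : IsLyndonWord v := by
  refine ⟨hv.1.1, fun w hw => ?_⟩
  have hle : v ≤ w := hv.2 (properSuffixes_subset_of_mem hv.1 hw)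
  exact hle.lt_of_ne fun h => notMem_properSuffixes_self w (h ▸ hw)

theorem left_of_isLeast_properSuffixes (hl : IsLyndonWord (u ++ v)) (hu : u ≠ [])
    (hv : IsLeast (properSuffixes (u ++ v)) v) : IsLyndonWord u := by
  refine ⟨hu, fun s hs => ?_⟩
  obtain ⟨hs_ne, r, hr, hrs⟩ := hs
  have hlt : u ++ v < s ++ v :=
    hl.2 _ ⟨by simp [hs_ne], r, hr, by rw [← List.append_assoc, hrs]⟩
  by_contra! hsu : s ≤ u
  by_cases hpre : s <+: u
  · obtain ⟨t, rfl⟩ := hpre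
    have hmin : v ≤ t ++ v :=
      hv.2 ⟨by simp [hv.1.1], s, hs_ne, (List.append_assoc s t v).symm⟩
    rw [List.append_assoc] at hlt
    -- `List.append_left_le` concerns the core `≤` on lists, not the one of the linear order.
    exact List.not_lt.mpr (List.append_left_le (List.not_lt.mp hmin.not_gt)) hlt
  · have hlt_u : s < u := hsu.lt_of_ne fun h => hpre (h ▸ List.prefix_rfl)
    exact hlt.asymm (append_lt_append_of_lt_of_not_prefix hlt_u hpre v v)

theorem lt_of_append (hl : IsLyndonWord (u ++ v)) (hu : u ≠ []) (hv : v ≠ []) : u < v :=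
  calc
    u ≤ u ++ v := not_lt.mp (List.not_lt.mpr List.le_append_left)
    _ < v := hl.2 v (mem_properSuffixes_append hu hv)

theorem exists_append_eq (hl : IsLyndonWord l) (hlen : 1 < l.length) :
    ∃ u v, IsLyndonWord u ∧ IsLyndonWord v ∧ u < v ∧ u ++ v = l := by
  obtain ⟨v, hv⟩ := exists_isLeast_properSuffixes hlen
  obtain ⟨hv_ne, u, hu, rfl⟩ := hv.1
  exact ⟨u, v, hl.left_of_isLeast_properSuffixes hu hv, of_isLeast_properSuffixes hv,
    hl.lt_of_append hu hv_ne, rfl⟩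

@[elab_as_elim]
theorem induction {motive : ∀ l : List α, IsLyndonWord l → Prop}
    (singleton : ∀ a (h : IsLyndonWord [a]), motive [a] h)
    (append : ∀ u v (hu : IsLyndonWord u) (hv : IsLyndonWord v) (h : IsLyndonWord (u ++ v)),
      u < v → motive u hu → motive v hv → motive (u ++ v) h)
    {l : List α} (hl : IsLyndonWord l) : motive l hl := by
  have hpos {w : List α} (hw : IsLyndonWord w) : 0 < w.length := List.length_pos_iff.mpr hw.1
  induction l using (measure List.length).wf.induction with | _ l ih
  by_cases hlen : 1 < l.length
  · obtain ⟨u, v, hu, hv, huv, rfl⟩ := hl.exists_append_eq hlen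
    have hu_lt : u.length < (u ++ v).length := by simpa using hpos hv
    have hv_lt : v.length < (u ++ v).length := by simpa using hpos hu
    exact append u v hu hv hl huv (ih u hu_lt hu) (ih v hv_lt hv)
  · obtain ⟨a, rfl⟩ := List.length_eq_one_iff.mp (le_antisymm (not_lt.mp hlen) (hpos hl))
    exact singleton a hl

end IsLyndonWord

theorem isLyndon_iff_isLyndonWord {n : ℕ} {l : List (Fin n)} : IsLyndon l ↔ IsLyndonWord l := by
  refine and_congr_right fun _ => ⟨?_, fun h k hk hkl => ?_⟩
  · rintro h v ⟨hv, u, hu, rfl⟩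
    have hlt : LexLt (u ++ v) ((u ++ v).drop u.length) :=
      h u.length (List.length_pos_iff.mpr hu) (by simpa using List.length_pos_iff.mpr hv)
    rwa [List.drop_left] at hlt
  · have hdrop : l.drop k ≠ [] := List.drop_eq_nil_iff.not.mpr hkl.not_ge
    have htake : l.take k ≠ [] := by
      rw [Ne, List.take_eq_nil_iff, not_or]
      exact ⟨hk.ne', List.ne_nil_of_length_pos (hk.trans hkl)⟩
    exact h _ ⟨hdrop, l.take k, htake, List.take_append_drop k l⟩

theorem non_good_lyndon_has_bad_factor_general {α : Type*} [LinearOrder α]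
    {good : List α → Prop} (hletters : ∀ a, good [a]) {l : List α} (hl : IsLyndonWord l)
    (hlbad : ¬ good l) :
    ∃ l₁ l₂, IsLyndonWord l₁ ∧ IsLyndonWord l₂ ∧ good l₁ ∧ good l₂ ∧ l₁ < l₂ ∧
      ¬ good (l₁ ++ l₂) ∧ l₁ ++ l₂ <:+: l := by
  induction hl using IsLyndonWord.induction with
  | singleton a _ => exact absurd (hletters a) hlbad
  | append u v hu hv _ huv ihu ihv =>
    by_cases hgu : good u
    · by_cases hgv : good v
      · exact ⟨u, v, hu, hv, hgu, hgv, huv, hlbad, List.infix_rfl⟩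
      · obtain ⟨l₁, l₂, h₁, h₂, hg₁, hg₂, hlt, hbad, hfactor⟩ := ihv hgv
        exact ⟨l₁, l₂, h₁, h₂, hg₁, hg₂, hlt, hbad,
          hfactor.trans (List.suffix_append u v).isInfix⟩
    · obtain ⟨l₁, l₂, h₁, h₂, hg₁, hg₂, hlt, hbad, hfactor⟩ := ihu hgu
      exact ⟨l₁, l₂, h₁, h₂, hg₁, hg₂, hlt, hbad,
        hfactor.trans (List.prefix_append u v).isInfix⟩

/-- If every one-letter word is good and `l` is a Lyndon word that is not good, then `l` has a
factor `l₁l₂` where `l₁, l₂` are good Lyndon words with `l₁ < l₂` lexicographically and `l₁l₂`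
is not good. -/
theorem non_good_lyndon_has_bad_factor {n : ℕ} (K : Type*) [Field K] {R : Type*} [Ring R]
    [Algebra K R] (b : Fin n → R) (hgen : Algebra.adjoin K (Set.range b) = ⊤)
    (hletters : ∀ i : Fin n, IsGood K b [i])
    (l : List (Fin n)) (hl : IsLyndon l) (hlbad : ¬ IsGood K b l) :
    ∃ l₁ l₂ : List (Fin n), IsLyndon l₁ ∧ IsLyndon l₂ ∧ IsGood K b l₁ ∧ IsGood K b l₂ ∧
      LexLt l₁ l₂ ∧ ¬ IsGood K b (l₁ ++ l₂) ∧ ∃ x z, l = x ++ (l₁ ++ l₂) ++ z := by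
  obtain ⟨l₁, l₂, h₁, h₂, hg₁, hg₂, hlt, hbad, x, z, hxz⟩ :=
    non_good_lyndon_has_bad_factor_general hletters (isLyndon_iff_isLyndonWord.mp hl) hlbad
  exact ⟨l₁, l₂, isLyndon_iff_isLyndonWord.mpr h₁, isLyndon_iff_isLyndonWord.mpr h₂, hg₁, hg₂, hlt,
    hbad, x, z, hxz.symm⟩
end

section
/- A word g is good for U = U^ı(sl_{n+1}) if and only if g = l_1 l_2 ⋯ l_m (m ≥ 0) where each l_t is a word of the form v_a v_{a+1} ⋯ v_b for some 1 ≤ a ≤ b ≤ n and l_1 ≥ l_2 ≥ ⋯ ≥ l_m lexicographically. In particular, the good Lyndon words are exactly the words v_a v_{a+1} ⋯ v_b with 1 ≤ a ≤ b ≤ n. -/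
/-- The defining relations of the split ıquantum group `U^ı(sl_{n+1})` of type `A_n` with
parameters `ξ_i = q⁻¹` : `B_iB_j = B_jB_i` for `|i-j| ≥ 2` and
`B_i²B_j - (q+q⁻¹) B_iB_jB_i + B_jB_i² = B_j` for `|i-j| = 1`. -/
inductive UiRel (n : ℕ) :
    FreeAlgebra (RatFunc ℚ) (Fin n) → FreeAlgebra (RatFunc ℚ) (Fin n) → Prop
  | comm (i j : Fin n) (h : (i : ℕ) + 1 < (j : ℕ)) :
      UiRel n (FreeAlgebra.ι (RatFunc ℚ) i * FreeAlgebra.ι (RatFunc ℚ) j)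
        (FreeAlgebra.ι (RatFunc ℚ) j * FreeAlgebra.ι (RatFunc ℚ) i)
  | serre (i j : Fin n) (h : (i : ℕ) + 1 = (j : ℕ) ∨ (j : ℕ) + 1 = (i : ℕ)) :
      UiRel n
        (FreeAlgebra.ι (RatFunc ℚ) i * FreeAlgebra.ι (RatFunc ℚ) i * FreeAlgebra.ι (RatFunc ℚ) j +
          FreeAlgebra.ι (RatFunc ℚ) j * FreeAlgebra.ι (RatFunc ℚ) i * FreeAlgebra.ι (RatFunc ℚ) i)
        (((RatFunc.X : RatFunc ℚ) + (RatFunc.X : RatFunc ℚ)⁻¹) • (FreeAlgebra.ι (RatFunc ℚ) i *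
            FreeAlgebra.ι (RatFunc ℚ) j * FreeAlgebra.ι (RatFunc ℚ) i) +
          FreeAlgebra.ι (RatFunc ℚ) j)

/-- The split ıquantum group `U = U^ı(sl_{n+1})` of type `A_n`, the quotient of the free
`ℚ(q)`-algebra on `B_1, …, B_n` by the defining relations. -/
abbrev Ui (n : ℕ) := RingQuot (UiRel n)

/-- The generators `B_1, …, B_n` of `U^ı(sl_{n+1})`. -/
noncomputable def Bgen (n : ℕ) (i : Fin n) : Ui n :=
  RingQuot.mkAlgHom (RatFunc ℚ) (UiRel n) (FreeAlgebra.ι (RatFunc ℚ) i)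

/-- The words of the form `v_a v_{a+1} ⋯ v_b` : nonempty words with consecutive increasing
letters. -/
def IsSegment {n : ℕ} (l : List (Fin n)) : Prop :=
  l ≠ [] ∧ l.Chain' (fun x y : Fin n => (y : ℕ) = (x : ℕ) + 1)

/-!
Suppose that two adjacent maximal segments `s`, `t` of a word satisfy `s < t`. The relations of
`U^ı`, read modulo `≺`-smaller words, rewrite `B_s B_t` in terms of smaller words, so the word is
not good.

Conversely, `U^ı` acts from the right on the functions of words killed by the `q`-Serre relations,
`B_i` acting as `f_i + (1 - q²)⁻¹ e_i`, where `e_i` deletes a first letter `i` and `f_i` is the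
quantum shuffle product with `i`. Applying `B_w` to a function supported on words of length at
least `ℓ(w)` and evaluating at the empty word returns a multiple of its value at `w`. For the
shuffle product of segments `l_1 ≥ ⋯ ≥ l_m`, the lexicographically largest word of the support is
`l_1 ⋯ l_m`, and its coefficient is positive for every ordering of `ℚ(q)` with `q > 0`.
-/

universe u

@[simp] lemma Bword_nil {R : Type*} [Monoid R] {n : ℕ} (b : Fin n → R) : Bword b [] = 1 := rfl

lemma Bword_cons {R : Type*} [Monoid R] {n : ℕ} (b : Fin n → R) (i : Fin n)
    (v : List (Fin n)) : Bword b (i :: v) = b i * Bword b v := by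
  simp [Bword]

lemma Bword_append {R : Type*} [Monoid R] {n : ℕ} (b : Fin n → R) (u v : List (Fin n)) :
    Bword b (u ++ v) = Bword b u * Bword b v := by
  simp [Bword]

section Relations

variable {K R : Type*} [Field K] [Ring R] [Algebra K R] {n : ℕ}

/-- The defining relations of `U^ı(sl_{n+1})` for elements `b i` of an arbitrary algebra, with a
scalar `c` in place of `q + q⁻¹`. -/
structure UiRelations (c : K) (b : Fin n → R) : Prop where
  comm (i j : Fin n) (hij : (i : ℕ) + 1 < j) : b i * b j = b j * b i
  serre (i j : Fin n) (hij : (i : ℕ) + 1 = j ∨ (j : ℕ) + 1 = i) :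
    b i * b i * b j + b j * b i * b i = c • (b i * b j * b i) + b j

/-- `y` is the letter following `x`, so that the segments are the nonempty `Nxt`-chains. -/
abbrev Nxt (x y : Fin n) : Prop := (y : ℕ) = x + 1

lemma Nxt.lt {x y : Fin n} (h : Nxt x y) : x < y :=
  Fin.lt_def.2 (by omega)

lemma Nxt.lt_of_mem {a j : Fin n} {s : List (Fin n)} (hs : (a :: s).IsChain Nxt) (hj : j ∈ s) :
    a < j :=
  (hs.imp fun _ _ => Nxt.lt).rel_cons hj

lemma Nxt.isPrefix_of_lt {a : Fin n} {s t : List (Fin n)} (hs : (a :: s).IsChain Nxt)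
    (ht : (a :: t).IsChain Nxt) (hst : s < t) : s <+: t := by
  induction s generalizing a t with
  | nil => exact List.nil_prefix
  | cons k s ih =>
    cases t with
    | nil => exact absurd hst (List.not_lt_nil _)
    | cons k' t =>
      rw [List.isChain_cons_cons] at hs ht
      obtain rfl : k = k' := Fin.ext (hs.1.trans ht.1.symm)
      rw [List.cons_lt_cons_iff] at hst
      have hst' : s < t := by simpa using hst
      exact List.cons_prefix_cons.2 ⟨rfl, ih hs.2 ht.2 hst'⟩

lemma UiRelations.commute_Bword {c : K} {b : Fin n → R} (h : UiRelations c b) {i : Fin n}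
    {w : List (Fin n)} (hw : ∀ j ∈ w, (i : ℕ) + 1 < j) : Commute (b i) (Bword b w) :=
  Commute.list_prod_right _ _ fun _ hx => by
    obtain ⟨j, hj, rfl⟩ := List.mem_map.1 hx
    exact h.comm i j (hw j hj)

end Relations

/-! ### Reduction of words that are not nonincreasing products of segments -/

section Reduction

variable {K R : Type*} [Field K] [Ring R] [Algebra K R] {n : ℕ} {b : Fin n → R} {c : K}

variable (K b) in
/-- The span of the `B_w` with `w` shorter than `N`, or of length `N` with first letter `> a`:
the error terms allowed when a word of length `N` starting with `a` is rewritten. -/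
def headSpan (a : Fin n) (N : ℕ) : Submodule K R :=
  Submodule.span K (Bword b '' {w | w.length < N ∨ (w.length = N ∧ ∃ j t, w = j :: t ∧ a < j)})

variable (K b) in
/-- The span of the `B_w` with `w ≺ g`, which contains `B_g` unless `g` is good. -/
def precSpan (g : List (Fin n)) : Submodule K R :=
  Submodule.span K (Bword b '' {w | PrecLt w g})

lemma Bword_mem_headSpan_of_length_lt {a : Fin n} {N : ℕ} {w : List (Fin n)} (h : w.length < N) :
    Bword b w ∈ headSpan K b a N :=
  Submodule.subset_span ⟨w, Or.inl h, rfl⟩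

lemma mul_Bword_mem_headSpan {a j : Fin n} {N : ℕ} {t : List (Fin n)} (haj : a < j)
    (h : t.length + 1 ≤ N) : b j * Bword b t ∈ headSpan K b a N := by
  rw [← Bword_cons]
  rcases h.lt_or_eq with h | h
  · exact Bword_mem_headSpan_of_length_lt h
  · exact Submodule.subset_span ⟨j :: t, Or.inr ⟨h, j, t, rfl, haj⟩, rfl⟩

lemma headSpan_mono {a a' : Fin n} {N N' : ℕ} (ha : a ≤ a') (hN : N' ≤ N) :
    headSpan K b a' N' ≤ headSpan K b a N := by
  refine Submodule.span_le.2 ?_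
  rintro _ ⟨w, hw | ⟨hw, j, t, rfl, hj⟩, rfl⟩
  · exact Bword_mem_headSpan_of_length_lt (hw.trans_le hN)
  · rw [Bword_cons]
    exact mul_Bword_mem_headSpan (ha.trans_lt hj) (hw.trans_le hN)

lemma mul_Bword_mem_headSpan_of_mem {a : Fin n} {N : ℕ} {x : R} (hx : x ∈ headSpan K b a N)
    (u : List (Fin n)) : x * Bword b u ∈ headSpan K b a (N + u.length) := by
  suffices headSpan K b a N ≤
      (headSpan K b a (N + u.length)).comap (LinearMap.mulRight K (Bword b u)) from this hx
  refine Submodule.span_le.2 ?_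
  rintro _ ⟨w, hw | ⟨hw, j, t, rfl, hj⟩, rfl⟩
  · rw [SetLike.mem_coe, Submodule.mem_comap, LinearMap.mulRight_apply, ← Bword_append]
    exact Bword_mem_headSpan_of_length_lt (by simpa using hw)
  · rw [SetLike.mem_coe, Submodule.mem_comap, LinearMap.mulRight_apply, Bword_cons, mul_assoc,
      ← Bword_append]
    refine mul_Bword_mem_headSpan hj (le_of_eq ?_)
    rw [List.length_cons] at hw
    rw [List.length_append]
    omega

lemma headSpan_le_precSpan (a : Fin n) (t : List (Fin n)) :
    headSpan K b a (t.length + 1) ≤ precSpan K b (a :: t) := by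
  refine Submodule.span_mono (Set.image_mono ?_)
  rintro w (hw | ⟨hw, j, t', rfl, hj⟩)
  · exact Or.inl hw
  · exact Or.inr ⟨hw, List.Lex.rel hj⟩

namespace UiRelations

/-- `B_a` commutes with the first letter of each spanning word of maximal length. -/
lemma mul_mem_headSpan (h : UiRelations c b) {a a' : Fin n} (ha : Nxt a a') {N : ℕ} {x : R}
    (hx : x ∈ headSpan K b a' N) : b a * x ∈ headSpan K b a' (N + 1) := by
  suffices headSpan K b a' N ≤
      (headSpan K b a' (N + 1)).comap (LinearMap.mulLeft K (b a)) from this hx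
  refine Submodule.span_le.2 ?_
  rintro _ ⟨w, hw | ⟨hw, j, t, rfl, hj⟩, rfl⟩
  · rw [SetLike.mem_coe, Submodule.mem_comap, LinearMap.mulLeft_apply, ← Bword_cons]
    exact Bword_mem_headSpan_of_length_lt (by simpa using hw)
  · have haj : (a : ℕ) + 1 < j := ha ▸ Fin.lt_def.1 hj
    rw [SetLike.mem_coe, Submodule.mem_comap, LinearMap.mulLeft_apply, Bword_cons, ← mul_assoc,
      h.comm a j haj, mul_assoc, ← Bword_cons]
    exact mul_Bword_mem_headSpan hj (by simpa using hw.le)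

lemma mul_smodEq (h : UiRelations c b) {a a' : Fin n} (ha : Nxt a a') {N : ℕ} {x y : R}
    (hxy : x ≡ y [SMOD headSpan K b a' N]) : b a * x ≡ b a * y [SMOD headSpan K b a' (N + 1)] := by
  rw [SModEq.sub_mem, ← mul_sub]
  exact h.mul_mem_headSpan ha (SModEq.sub_mem.1 hxy)

lemma mul_mul_self_smodEq (h : UiRelations c b) (hc : c ≠ 0) {a a' : Fin n} (ha : Nxt a a')
    (u : List (Fin n)) :
    b a * b a' * b a * Bword b u ≡ c⁻¹ • (b a * b a * b a' * Bword b u)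
      [SMOD headSpan K b a (u.length + 3)] := by
  have hsolve : b a * b a' * b a - c⁻¹ • (b a * b a * b a') =
      c⁻¹ • (b a' * (b a * b a) - b a') := by
    have := eq_sub_of_add_eq (h.serre a a' (Or.inl ha.symm)).symm
    rw [← inv_smul_smul₀ hc (b a * b a' * b a), this, ← smul_sub, mul_assoc (b a')]
    congr 1
    abel
  have hword : b a * b a' * b a * Bword b u - c⁻¹ • (b a * b a * b a' * Bword b u) =
      c⁻¹ • (b a' * Bword b (a :: a :: u) - b a' * Bword b u) := by
    rw [← smul_mul_assoc, ← sub_mul, hsolve, smul_mul_assoc, sub_mul]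
    simp only [Bword_cons, mul_assoc]
  rw [SModEq.sub_mem, hword]
  exact Submodule.smul_mem _ _ (sub_mem (mul_Bword_mem_headSpan ha.lt (by simp))
    (mul_Bword_mem_headSpan ha.lt (by omega)))

lemma mul_self_mem_headSpan (h : UiRelations c b) {a a' : Fin n} (ha : Nxt a a') :
    b a * b a' * b a' ∈ headSpan K b a 3 := by
  have hsolve : b a * b a' * b a' =
      c • (b a' * Bword b [a, a']) + Bword b [a] - b a' * Bword b [a', a] := by
    rw [eq_sub_iff_add_eq, add_comm]
    simpa [Bword_cons, mul_assoc] using h.serre a' a (Or.inr ha.symm)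
  rw [hsolve]
  exact sub_mem (add_mem (Submodule.smul_mem _ _ (mul_Bword_mem_headSpan ha.lt le_rfl))
    (Bword_mem_headSpan_of_length_lt (by simp))) (mul_Bword_mem_headSpan ha.lt le_rfl)

lemma Bword_cons_cons_mul_mem_headSpan (h : UiRelations c b) (hc : c ≠ 0) {a a' : Fin n}
    {s : List (Fin n)} (hs : (a :: a' :: s).IsChain Nxt) :
    Bword b (a :: a' :: s) * b a' ∈ headSpan K b a (s.length + 3) := by
  rw [List.isChain_cons_cons] at hs
  cases s with
  | nil => simpa [Bword_cons, mul_assoc] using h.mul_self_mem_headSpan hs.1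
  | cons a'' s =>
    have hs' := List.isChain_cons_cons.1 hs.2
    have hcomm : b a' * Bword b s = Bword b s * b a' :=
      h.commute_Bword fun k hk => hs'.1 ▸ Fin.lt_def.1 (Nxt.lt_of_mem hs'.2 hk)
    have hmod : Bword b (a :: a' :: a'' :: s) * b a' ≡
        c⁻¹ • (b a * b a' * b a' * Bword b (a'' :: s)) [SMOD headSpan K b a (s.length + 4)] := by
      have := h.mul_smodEq hs.1 (h.mul_mul_self_smodEq hc hs'.1 s)
      simpa only [Bword_cons, mul_assoc, mul_smul_comm, hcomm] using
        this.mono (headSpan_mono hs.1.lt.le le_rfl)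
    have hmem : c⁻¹ • (b a * b a' * b a' * Bword b (a'' :: s)) ∈
        headSpan K b a (s.length + 4) :=
      Submodule.smul_mem _ _ (headSpan_mono le_rfl (by simp only [List.length_cons]; omega)
        (mul_Bword_mem_headSpan_of_mem (h.mul_self_mem_headSpan hs.1) (a'' :: s)))
    simpa using add_mem (SModEq.sub_mem.1 hmod) hmem

lemma Bword_mul_mem_headSpan (h : UiRelations c b) (hc : c ≠ 0) {a j : Fin n} {s : List (Fin n)}
    (hs : (a :: s).IsChain Nxt) (haj : a < j)
    (hj : ¬ Nxt ((a :: s).getLast (List.cons_ne_nil a s)) j) :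
    Bword b (a :: s) * b j ∈ headSpan K b a (s.length + 2) := by
  induction s generalizing a with
  | nil =>
    rw [List.getLast_singleton] at hj
    have hlt : (a : ℕ) + 1 < j := by
      have := Fin.lt_def.1 haj
      omega
    have hswap : Bword b [a] * b j = b j * Bword b [a] := by
      simpa [Bword_cons] using h.comm a j hlt
    rw [hswap]
    exact mul_Bword_mem_headSpan haj le_rfl
  | cons a' s ih =>
    obtain ⟨ha, hs'⟩ := List.isChain_cons_cons.1 hs
    rw [List.getLast_cons (List.cons_ne_nil a' s)] at hj
    have ha'j : a' ≤ j := Fin.le_def.2 (ha ▸ Fin.lt_def.1 haj)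
    rcases ha'j.lt_or_eq with hlt | rfl
    · rw [Bword_cons, mul_assoc]
      exact headSpan_mono ha.lt.le le_rfl (h.mul_mem_headSpan ha (ih hs' hlt hj))
    · exact h.Bword_cons_cons_mul_mem_headSpan hc hs

lemma Bword_mul_Bword_cons (h : UiRelations c b) {a a' : Fin n} {s : List (Fin n)}
    (hs : (a :: a' :: s).IsChain Nxt) (v : List (Fin n)) :
    Bword b (a :: a' :: s) * Bword b (a :: v) = b a * b a' * b a * Bword b (s ++ v) := by
  rw [List.isChain_cons_cons] at hs
  have hcomm : Bword b s * b a = b a * Bword b s :=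
    (h.commute_Bword fun k hk => hs.1 ▸ Fin.lt_def.1 (Nxt.lt_of_mem hs.2 hk)).symm
  simp only [Bword_cons, Bword_append, mul_assoc]
  rw [← mul_assoc (Bword b s) (b a), hcomm, mul_assoc]

lemma Bword_mul_extension_smodEq (h : UiRelations c b) (hc : c ≠ 0) {a e : Fin n}
    {s : List (Fin n)} (hs : (a :: (s ++ [e])).IsChain Nxt) :
    Bword b (a :: s) * Bword b (a :: (s ++ [e])) ≡
      c • (Bword b (a :: (s ++ [e])) * Bword b (a :: s))
      [SMOD headSpan K b a (2 * s.length + 3)] := by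
  induction s generalizing a with
  | nil =>
    have hae : Nxt a e := (List.isChain_cons_cons.1 hs).1
    simpa [Bword_cons, mul_assoc, smul_smul, mul_inv_cancel₀ hc] using
      ((h.mul_mul_self_smodEq hc hae []).smul c).symm
  | cons a' s ih =>
    rw [List.cons_append] at hs ⊢
    obtain ⟨ha, hs'⟩ := List.isChain_cons_cons.1 hs
    have hs₀ : (a :: a' :: s).IsChain Nxt :=
      List.IsChain.left_of_append (l₂ := [e]) (by simpa using hs)
    have hswap (u : List (Fin n)) (hu : u.length = 2 * s.length + 2) :
        b a * b a' * b a * Bword b u ≡ c⁻¹ • (b a * (b a * Bword b (a' :: u)))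
          [SMOD headSpan K b a (2 * (a' :: s).length + 3)] := by
      simpa only [Bword_cons, mul_assoc] using
        (h.mul_mul_self_smodEq hc ha u).mono (headSpan_mono le_rfl (by simp; omega))
    have hind : b a * (b a * (Bword b (a' :: s) * Bword b (a' :: (s ++ [e])))) ≡
        b a * (b a * (c • (Bword b (a' :: (s ++ [e])) * Bword b (a' :: s))))
          [SMOD headSpan K b a (2 * (a' :: s).length + 3)] :=
      (h.mul_smodEq ha (h.mul_smodEq ha (ih hs'))).mono (headSpan_mono ha.lt.le le_rfl)
    calc Bword b (a :: a' :: s) * Bword b (a :: a' :: (s ++ [e]))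
        = b a * b a' * b a * Bword b (s ++ a' :: (s ++ [e])) := h.Bword_mul_Bword_cons hs₀ _
      _ ≡ c⁻¹ • (b a * (b a * (Bword b (a' :: s) * Bword b (a' :: (s ++ [e])))))
          [SMOD headSpan K b a (2 * (a' :: s).length + 3)] := by
        rw [← Bword_append]
        exact hswap _ (by simp; omega)
      _ ≡ c⁻¹ • (b a * (b a * (c • (Bword b (a' :: (s ++ [e])) * Bword b (a' :: s)))))
          [SMOD headSpan K b a (2 * (a' :: s).length + 3)] := hind.smul _
      _ = c • c⁻¹ • (b a * (b a * Bword b (a' :: ((s ++ [e]) ++ a' :: s)))) := by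
        rw [← Bword_append, mul_smul_comm, mul_smul_comm, smul_comm, List.cons_append]
      _ ≡ c • (b a * b a' * b a * Bword b ((s ++ [e]) ++ a' :: s))
          [SMOD headSpan K b a (2 * (a' :: s).length + 3)] :=
        ((hswap _ (by simp; omega)).smul c).symm
      _ = c • (Bword b (a :: a' :: (s ++ [e])) * Bword b (a :: a' :: s)) := by
        rw [h.Bword_mul_Bword_cons hs]

end UiRelations

lemma PrecLt.context {w m : List (Fin n)} (h : PrecLt w m) (X Y : List (Fin n)) :
    PrecLt (X ++ w ++ Y) (X ++ m ++ Y) := by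
  rcases h with h | ⟨hlen, hlt⟩
  · left
    simpa using h
  · right
    refine ⟨by simp [hlen], ?_⟩
    rw [List.append_assoc, List.append_assoc]
    refine List.Lex.append_left _ ?_ X
    clear X
    induction hlt with
    | nil => simp at hlen
    | cons _ ih => exact List.Lex.cons (ih (by simpa using hlen))
    | rel hr => exact List.Lex.rel hr

lemma Bword_context_mem_precSpan {m : List (Fin n)} (h : Bword b m ∈ precSpan K b m)
    (X Y : List (Fin n)) : Bword b (X ++ m ++ Y) ∈ precSpan K b (X ++ m ++ Y) := by
  suffices precSpan K b m ≤ (precSpan K b (X ++ m ++ Y)).comap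
      (LinearMap.mulLeft K (Bword b X) ∘ₗ LinearMap.mulRight K (Bword b Y)) by
    simpa only [Bword_append, mul_assoc] using! this h
  refine Submodule.span_le.2 ?_
  rintro _ ⟨w, hw, rfl⟩
  refine Submodule.subset_span ⟨_, hw.context X Y, ?_⟩
  simp only [Bword_append, mul_assoc, LinearMap.comp_apply, LinearMap.mulLeft_apply,
    LinearMap.mulRight_apply]

lemma UiRelations.Bword_extension_mem_precSpan (h : UiRelations c b) (hc : c ≠ 0) {a e : Fin n}
    {s : List (Fin n)} (hs : (a :: (s ++ [e])).IsChain Nxt) :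
    Bword b (a :: s ++ a :: (s ++ [e])) ∈ precSpan K b (a :: s ++ a :: (s ++ [e])) := by
  have hsub : Bword b (a :: s ++ a :: (s ++ [e])) - c • Bword b (a :: (s ++ [e]) ++ a :: s) ∈
      precSpan K b (a :: s ++ a :: (s ++ [e])) := by
    rw [Bword_append, Bword_append]
    refine headSpan_le_precSpan a (s ++ a :: (s ++ [e])) ?_
    have hlen : (s ++ a :: (s ++ [e])).length + 1 = 2 * s.length + 3 := by simp; omega
    rw [hlen]
    exact SModEq.sub_mem.1 (h.Bword_mul_extension_smodEq hc hs)
  have hprec : PrecLt (a :: (s ++ [e]) ++ a :: s) (a :: s ++ a :: (s ++ [e])) := by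
    refine Or.inr ⟨by simp [add_comm], ?_⟩
    simp only [LexLt, List.cons_append, List.append_assoc]
    exact List.Lex.cons (List.Lex.append_left _ (List.Lex.rel (Nxt.lt_of_mem hs (by simp))) _)
  have hmem : c • Bword b (a :: (s ++ [e]) ++ a :: s) ∈
      precSpan K b (a :: s ++ a :: (s ++ [e])) :=
    Submodule.smul_mem _ c (Submodule.subset_span ⟨_, hprec, rfl⟩)
  simpa using add_mem hsub hmem

lemma UiRelations.Bword_append_mem_precSpan (h : UiRelations c b) (hc : c ≠ 0) {a d : Fin n}
    {s t : List (Fin n)} (hs : (a :: s).IsChain Nxt) (ht : (d :: t).IsChain Nxt)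
    (hst : ¬ Nxt ((a :: s).getLast (List.cons_ne_nil a s)) d) (hlt : a :: s < d :: t) :
    Bword b (a :: s ++ d :: t) ∈ precSpan K b (a :: s ++ d :: t) := by
  rw [List.cons_lt_cons_iff] at hlt
  rcases hlt with had | ⟨rfl, hlt⟩
  · have hmem : Bword b (a :: (s ++ [d])) ∈ precSpan K b (a :: (s ++ [d])) :=
      headSpan_le_precSpan a (s ++ [d]) (by
        simpa [Bword_cons, Bword_append, mul_assoc] using h.Bword_mul_mem_headSpan hc hs had hst)
    simpa using Bword_context_mem_precSpan hmem [] t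
  · obtain ⟨r, rfl⟩ := Nxt.isPrefix_of_lt hs ht hlt
    cases r with
    | nil => simp at hlt
    | cons e r =>
      have hse : (a :: (s ++ [e])).IsChain Nxt :=
        List.IsChain.left_of_append (l₂ := r) (by simpa using ht)
      simpa using Bword_context_mem_precSpan (h.Bword_extension_mem_precSpan hc hse) [] r

theorem UiRelations.exists_segments_of_isGood (h : UiRelations c b) (hc : c ≠ 0)
    {g : List (Fin n)} (hg : IsGood K b g) :
    ∃ L : List (List (Fin n)), (∀ l ∈ L, IsSegment l) ∧
      L.IsChain (fun a b => ¬ LexLt a b) ∧ g = L.flatten := by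
  set p : Fin n → Fin n → Bool := fun x y => decide (Nxt x y)
  have hseg : ∀ l ∈ g.splitBy p, IsSegment l := fun l hl =>
    ⟨List.ne_nil_of_mem_splitBy hl,
      (List.isChain_of_mem_splitBy hl).imp fun _ _ h => of_decide_eq_true h⟩
  refine ⟨g.splitBy p, hseg,
    List.isChain_iff_forall_rel_of_append_cons_cons.2 fun s t X Y hL hst => hg ?_,
    (List.flatten_splitBy p g).symm⟩
  obtain ⟨hs₀, ht₀, hbreak⟩ := List.isChain_iff_forall_rel_of_append_cons_cons.1
    (List.isChain_getLast_head_splitBy p g) hL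
  have hs := (hseg s (by simp [hL])).2
  have ht := (hseg t (by simp [hL])).2
  obtain ⟨a, s, rfl⟩ := List.exists_cons_of_ne_nil hs₀
  obtain ⟨d, t, rfl⟩ := List.exists_cons_of_ne_nil ht₀
  have hmem := Bword_context_mem_precSpan
    (h.Bword_append_mem_precSpan hc hs ht (of_decide_eq_false hbreak) hst) X.flatten Y.flatten
  have hg' : X.flatten ++ (a :: s ++ d :: t) ++ Y.flatten = g := by
    rw [← List.flatten_splitBy p g, hL]
    simp
  exact hg' ▸ hmem

end Reduction

/-! ### Quantum shuffles -/

section Shuffle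

variable {K : Type*} [Field K] {n : ℕ}

variable (K n) in
/-- Functions of words, that is, functionals on the free algebra. -/
abbrev WordFun := List (Fin n) → K

/-- The Cartan matrix of type `A_n`. -/
def cartan (i j : Fin n) : ℤ :=
  if i = j then 2 else if (i : ℕ) + 1 = j ∨ (j : ℕ) + 1 = i then -1 else 0

lemma cartan_self (i : Fin n) : cartan i i = 2 := if_pos rfl

lemma cartan_adjacent {i j : Fin n} (h : (i : ℕ) + 1 = j ∨ (j : ℕ) + 1 = i) : cartan i j = -1 := by
  have hij : i ≠ j := by
    rintro rfl
    omega
  rw [cartan, if_neg hij, if_pos h]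

lemma cartan_distant {i j : Fin n} (h : (i : ℕ) + 1 < j) : cartan i j = 0 := by
  rw [cartan, if_neg (Fin.ne_of_lt (Fin.lt_def.2 (by omega))), if_neg (by omega)]

lemma cartan_comm (i j : Fin n) : cartan i j = cartan j i := by
  simp only [cartan, eq_comm (a := i), or_comm]

variable (K) in
/-- The skew derivation `e_k`, deleting the first letter `k`. -/
def eOp (k : Fin n) : WordFun K n →ₗ[K] WordFun K n :=
  LinearMap.funLeft K K (List.cons k)

lemma eOp_apply (k : Fin n) (x : WordFun K n) (w : List (Fin n)) : eOp K k x w = x (k :: w) := rfl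

/-- The operator scaling the value at `w` by `q ^ (-(α_k, |w|))`, with `|w|` the weight of `w`. -/
def kOp (q : K) (k : Fin n) : WordFun K n →ₗ[K] WordFun K n :=
  LinearMap.pi fun w => q ^ (-(w.map (cartan k)).sum) • LinearMap.proj w

lemma kOp_apply (q : K) (k : Fin n) (x : WordFun K n) (w : List (Fin n)) :
    kOp q k x w = q ^ (-(w.map (cartan k)).sum) * x w := rfl

lemma eOp_kOp {q : K} (hq : q ≠ 0) (j k : Fin n) (x : WordFun K n) :
    eOp K j (kOp q k x) = q ^ (-cartan k j) • kOp q k (eOp K j x) := by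
  ext w
  simp only [eOp_apply, kOp_apply, Pi.smul_apply, smul_eq_mul, List.map_cons, List.sum_cons,
    neg_add, zpow_add₀ hq, mul_assoc]

lemma kOp_comm (q : K) (j k : Fin n) (x : WordFun K n) :
    kOp q j (kOp q k x) = kOp q k (kOp q j x) := by
  ext w
  simp only [kOp_apply, mul_left_comm]

/-- The value at a word of the quantum shuffle product, as a bilinear form. -/
def shuffleAt (q : K) : List (Fin n) → WordFun K n →ₗ[K] WordFun K n →ₗ[K] K
  | [] => (LinearMap.mul K K).compl₁₂ (LinearMap.proj []) (LinearMap.proj [])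
  | k :: w => (shuffleAt q w).comp (eOp K k) + (shuffleAt q w).compl₁₂ (kOp q k) (eOp K k)

/-- The quantum shuffle product, dual to the coproduct of the free algebra. It is determined by
`e_k (x ∘ y) = e_k x ∘ y + k_k x ∘ e_k y` and multiplicativity at the empty word. -/
def shuffle (q : K) : WordFun K n →ₗ[K] WordFun K n →ₗ[K] WordFun K n :=
  LinearMap.mk₂ K (fun x y w => shuffleAt q w x y)
    (fun _ _ _ => funext fun _ => by simp) (fun _ _ _ => funext fun _ => by simp)
    (fun _ _ _ => funext fun _ => by simp) (fun _ _ _ => funext fun _ => by simp)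

lemma shuffle_nil (q : K) (x y : WordFun K n) : shuffle q x y [] = x [] * y [] := rfl

lemma shuffle_cons (q : K) (x y : WordFun K n) (k : Fin n) (w : List (Fin n)) :
    shuffle q x y (k :: w) =
      shuffle q (eOp K k x) y w + shuffle q (kOp q k x) (eOp K k y) w := rfl

lemma eOp_shuffle (q : K) (k : Fin n) (x y : WordFun K n) :
    eOp K k (shuffle q x y) = shuffle q (eOp K k x) y + shuffle q (kOp q k x) (eOp K k y) := rfl

variable (K) in
/-- The indicator function of a word. -/
def wordSingle (l : List (Fin n)) : WordFun K n := Pi.single l 1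

lemma wordSingle_apply (l w : List (Fin n)) : wordSingle K l w = if w = l then 1 else 0 := by
  simp [wordSingle, Pi.single_apply]

lemma kOp_wordSingle (q : K) (k : Fin n) (l : List (Fin n)) :
    kOp q k (wordSingle K l) = q ^ (-(l.map (cartan k)).sum) • wordSingle K l := by
  ext w
  by_cases h : w = l <;> simp [kOp_apply, wordSingle_apply, h]

lemma eOp_wordSingle_nil (k : Fin n) : eOp K k (wordSingle K []) = 0 := by
  ext w
  simp [eOp_apply, wordSingle_apply]

lemma eOp_wordSingle_cons (k i : Fin n) (l : List (Fin n)) :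
    eOp K k (wordSingle K (i :: l)) = if k = i then wordSingle K l else 0 := by
  ext w
  split_ifs with h <;> simp [eOp_apply, wordSingle_apply, h]

lemma shuffle_wordSingle_nil (q : K) (y : WordFun K n) : shuffle q (wordSingle K []) y = y := by
  ext w
  induction w generalizing y with
  | nil => simp [shuffle_nil, wordSingle_apply]
  | cons k w ih =>
    simp [shuffle_cons, eOp_wordSingle_nil, kOp_wordSingle, ih, eOp_apply]

/-- `Shuf u v w`: the word `w` is a shuffle of `u` and `v`. -/
inductive Shuf {α : Type*} : List α → List α → List α → Prop
  | nil : Shuf [] [] []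
  | left {u v w} (k) : Shuf u v w → Shuf (k :: u) v (k :: w)
  | right {u v w} (k) : Shuf u v w → Shuf u (k :: v) (k :: w)

lemma Shuf.length_eq {α : Type*} {u v w : List α} (h : Shuf u v w) :
    w.length = u.length + v.length := by
  induction h with
  | nil => rfl
  | left k _ ih => rw [List.length_cons, List.length_cons, ih, Nat.add_right_comm]
  | right k _ ih => rw [List.length_cons, List.length_cons, ih, Nat.add_assoc]

lemma Shuf.nil_left {α : Type*} (v : List α) : Shuf [] v v := by
  induction v with
  | nil => exact .nil
  | cons k v ih => exact .right k ih

lemma Shuf.append {α : Type*} (u v : List α) : Shuf u v (u ++ v) := by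
  induction u with
  | nil => exact nil_left v
  | cons k u ih => exact .left k ih

lemma Shuf.eq_of_nil_left {α : Type*} {v w : List α} (h : Shuf [] v w) : w = v := by
  generalize hu : ([] : List α) = u at h
  induction h with
  | nil => rfl
  | left => simp at hu
  | right k _ ih => rw [ih hu]

lemma Shuf.eq_of_nil_right {α : Type*} {u w : List α} (h : Shuf u [] w) : w = u := by
  generalize hv : ([] : List α) = v at h
  induction h with
  | nil => rfl
  | left k _ ih => rw [ih hv]
  | right => simp at hv

lemma exists_shuf_of_shuffle_ne_zero {q : K} {x y : WordFun K n} {w : List (Fin n)}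
    (h : shuffle q x y w ≠ 0) : ∃ u v, x u ≠ 0 ∧ y v ≠ 0 ∧ Shuf u v w := by
  induction w generalizing x y with
  | nil =>
    rw [shuffle_nil] at h
    exact ⟨[], [], left_ne_zero_of_mul h, right_ne_zero_of_mul h, .nil⟩
  | cons k w ih =>
    rw [shuffle_cons] at h
    by_cases hleft : shuffle q (eOp K k x) y w = 0
    · rw [hleft, zero_add] at h
      obtain ⟨u, v, hu, hv, hs⟩ := ih h
      exact ⟨u, k :: v, right_ne_zero_of_mul hu, hv, .right k hs⟩
    · obtain ⟨u, v, hu, hv, hs⟩ := ih hleft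
      exact ⟨k :: u, v, hu, hv, .left k hs⟩

lemma exists_shuf_of_wordSingle_shuffle_ne_zero {q : K} {l w : List (Fin n)} {y : WordFun K n}
    (h : shuffle q (wordSingle K l) y w ≠ 0) : ∃ v, y v ≠ 0 ∧ Shuf l v w := by
  obtain ⟨u, v, hu, hv, hs⟩ := exists_shuf_of_shuffle_ne_zero h
  rw [wordSingle_apply, ne_eq, ite_eq_right_iff, Classical.not_imp] at hu
  exact ⟨v, hv, hu.1 ▸ hs⟩

/-! ### Functions killing the `q`-Serre relations -/

variable (n) in
/-- The functions of words which, as functionals on the free algebra, kill the two-sided ideal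
generated by the `q`-Serre relations. -/
def serreSubmodule (q : K) : Submodule K (WordFun K n) where
  carrier := {x | ∀ (u v : List (Fin n)) (i j : Fin n),
    ((i : ℕ) + 1 < j → x (u ++ i :: j :: v) = x (u ++ j :: i :: v)) ∧
    ((i : ℕ) + 1 = j ∨ (j : ℕ) + 1 = i → x (u ++ i :: i :: j :: v) + x (u ++ j :: i :: i :: v) =
      (q + q⁻¹) * x (u ++ i :: j :: i :: v))}
  zero_mem' := by simp
  add_mem' hx hy u v i j := by
    refine ⟨fun h => ?_, fun h => ?_⟩
    · simp only [Pi.add_apply, (hx u v i j).1 h, (hy u v i j).1 h]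
    · simp only [Pi.add_apply]
      linear_combination (hx u v i j).2 h + (hy u v i j).2 h
  smul_mem' c x hx u v i j := by
    refine ⟨fun h => ?_, fun h => ?_⟩
    · simp only [Pi.smul_apply, (hx u v i j).1 h]
    · simp only [Pi.smul_apply, smul_eq_mul]
      linear_combination c * (hx u v i j).2 h

section SerreSubmodule

variable {q : K} {x y : WordFun K n}

lemma eOp_comm (hx : x ∈ serreSubmodule n q) {i j : Fin n} (hij : (i : ℕ) + 1 < j) :
    eOp K i (eOp K j x) = eOp K j (eOp K i x) :=
  funext fun v => ((hx [] v i j).1 hij).symm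

lemma eOp_serre (hx : x ∈ serreSubmodule n q) {i j : Fin n}
    (hij : (i : ℕ) + 1 = j ∨ (j : ℕ) + 1 = i) :
    eOp K i (eOp K i (eOp K j x)) =
      (q + q⁻¹) • eOp K i (eOp K j (eOp K i x)) - eOp K j (eOp K i (eOp K i x)) :=
  eq_sub_of_add_eq' (funext fun v => (hx [] v i j).2 hij)

lemma eOp_mem_serreSubmodule (hx : x ∈ serreSubmodule n q) (k : Fin n) :
    eOp K k x ∈ serreSubmodule n q :=
  fun u v i j => hx (k :: u) v i j

lemma kOp_mem_serreSubmodule (hx : x ∈ serreSubmodule n q) (k : Fin n) :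
    kOp q k x ∈ serreSubmodule n q := by
  refine fun u v i j => ⟨fun h => ?_, fun h => ?_⟩
  · simp only [kOp_apply, (hx u v i j).1 h, List.map_append, List.map_cons, List.sum_append,
      List.sum_cons, add_left_comm]
  · have := (hx u v i j).2 h
    simp only [kOp_apply, List.map_append, List.map_cons, List.sum_append, List.sum_cons,
      add_left_comm (cartan k j)]
    linear_combination _ * this

/-- The `q`-Serre polynomials in the `e_k` act on shuffle products as primitive elements. -/
lemma eOp_shuffle_relations (hq : q ≠ 0) (hx : x ∈ serreSubmodule n q)
    (hy : y ∈ serreSubmodule n q) (i j : Fin n) :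
    ((i : ℕ) + 1 < j →
      eOp K j (eOp K i (shuffle q x y)) = eOp K i (eOp K j (shuffle q x y))) ∧
    ((i : ℕ) + 1 = j ∨ (j : ℕ) + 1 = i →
      eOp K j (eOp K i (eOp K i (shuffle q x y))) + eOp K i (eOp K i (eOp K j (shuffle q x y))) =
        (q + q⁻¹) • eOp K i (eOp K j (eOp K i (shuffle q x y)))) := by
  refine ⟨fun hij => ?_, fun hij => ?_⟩
  · simp only [eOp_shuffle, map_add, eOp_kOp hq, cartan_comm j i, cartan_distant hij,
      eOp_comm hx hij, eOp_comm hy hij, kOp_comm q i j, neg_zero, zpow_zero, one_smul]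
    abel
  · simp only [eOp_shuffle, map_add, eOp_kOp hq, cartan_comm j i, cartan_adjacent hij,
      cartan_self, eOp_serre hx hij, eOp_serre hy hij, kOp_comm q i j, map_smul, map_sub,
      LinearMap.smul_apply, LinearMap.sub_apply, neg_neg, zpow_neg, zpow_ofNat]
    match_scalars <;> field_simp <;> ring

lemma shuffle_mem_serreSubmodule (hq : q ≠ 0) (hx : x ∈ serreSubmodule n q)
    (hy : y ∈ serreSubmodule n q) : shuffle q x y ∈ serreSubmodule n q := by
  intro u v i j
  induction u generalizing x y with
  | nil =>
    have h := eOp_shuffle_relations hq hx hy i j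
    exact ⟨fun hij => congrFun (h.1 hij) v, fun hij => congrFun (h.2 hij) v⟩
  | cons k u ih =>
    have hleft := ih (eOp_mem_serreSubmodule hx k) hy
    have hright := ih (kOp_mem_serreSubmodule hx k) (eOp_mem_serreSubmodule hy k)
    simp only [List.cons_append, shuffle_cons]
    refine ⟨fun h => ?_, fun h => ?_⟩
    · rw [hleft.1 h, hright.1 h]
    · linear_combination hleft.2 h + hright.2 h

lemma wordSingle_eq_zero {l w : List (Fin n)} (hl : l.IsChain Nxt) (hw : ¬ w.IsChain Nxt) :
    wordSingle K l w = 0 := by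
  rw [wordSingle_apply, if_neg]
  rintro rfl
  exact hw hl

lemma wordSingle_mem_serreSubmodule {l : List (Fin n)} (hl : l.IsChain Nxt) :
    wordSingle K l ∈ serreSubmodule n q := by
  refine fun u v i j => ⟨fun h => ?_, fun _ => ?_⟩
  · rw [wordSingle_eq_zero hl, wordSingle_eq_zero hl] <;>
      rw [List.isChain_append_cons_cons] <;> omega
  · rw [wordSingle_eq_zero hl, wordSingle_eq_zero hl, wordSingle_eq_zero hl, add_zero, mul_zero] <;>
      rw [List.isChain_append_cons_cons, List.isChain_cons_cons] <;> omega

end SerreSubmodule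

/-! ### The operators representing `U^ı` -/

/-- Left shuffle multiplication by the letter `i`. -/
def fOp (q : K) (i : Fin n) : WordFun K n →ₗ[K] WordFun K n := shuffle q (wordSingle K [i])

lemma fOp_nil (q : K) (i : Fin n) (y : WordFun K n) : fOp q i y [] = 0 := by
  simp [fOp, shuffle_nil, wordSingle_apply]

lemma eOp_fOp (q : K) (k i : Fin n) (y : WordFun K n) :
    eOp K k (fOp q i y) =
      (if k = i then (1 : K) else 0) • y + q ^ (-cartan k i) • fOp q i (eOp K k y) := by
  rw [fOp, eOp_shuffle, eOp_wordSingle_cons, kOp_wordSingle]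
  split_ifs with h <;> simp [shuffle_wordSingle_nil]

lemma eq_zero_of_eOp_eq_smul {F : WordFun K n → WordFun K n} (hnil : ∀ y, F y [] = 0)
    (hcons : ∀ k y, ∃ c : K, eOp K k (F y) = c • F (eOp K k y)) (y : WordFun K n) : F y = 0 := by
  ext w
  induction w generalizing y with
  | nil => exact hnil y
  | cons k w ih =>
    obtain ⟨c, hc⟩ := hcons k y
    change eOp K k (F y) w = 0
    rw [hc, Pi.smul_apply, ih, Pi.zero_apply, smul_zero]

lemma fOp_comm (q : K) {i j : Fin n} (hij : (i : ℕ) + 1 < j) (y : WordFun K n) :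
    fOp q i (fOp q j y) = fOp q j (fOp q i y) := by
  rw [← sub_eq_zero]
  refine eq_zero_of_eOp_eq_smul (F := fun y => fOp q i (fOp q j y) - fOp q j (fOp q i y))
    (fun y => by simp [fOp_nil]) (fun k y => ⟨q ^ (-cartan k i) * q ^ (-cartan k j), ?_⟩) y
  have hcartan := cartan_distant hij
  have hne : i ≠ j := Fin.ne_of_lt (Fin.lt_def.2 (by omega))
  by_cases hi : k = i
  · subst hi
    simp only [map_sub, eOp_fOp, map_add, map_smul, hcartan, if_true, hne, if_false]
    match_scalars <;> simp
  by_cases hj : k = j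
  · subst hj
    simp only [map_sub, eOp_fOp, map_add, map_smul, cartan_comm k i, hcartan, if_true, hne.symm,
      if_false]
    match_scalars <;> simp
  simp only [map_sub, eOp_fOp, map_add, map_smul, hi, hj, if_false]
  match_scalars <;> ring

lemma fOp_serre {q : K} (hq : q ≠ 0) {i j : Fin n} (hij : (i : ℕ) + 1 = j ∨ (j : ℕ) + 1 = i)
    (y : WordFun K n) :
    fOp q i (fOp q i (fOp q j y)) =
      (q + q⁻¹) • fOp q i (fOp q j (fOp q i y)) - fOp q j (fOp q i (fOp q i y)) := by
  rw [← sub_eq_zero]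
  refine eq_zero_of_eOp_eq_smul (F := fun y => fOp q i (fOp q i (fOp q j y)) -
      ((q + q⁻¹) • fOp q i (fOp q j (fOp q i y)) - fOp q j (fOp q i (fOp q i y))))
    (fun y => by simp [fOp_nil])
    (fun k y => ⟨q ^ (-cartan k i) * q ^ (-cartan k i) * q ^ (-cartan k j), ?_⟩) y
  have hcartan := cartan_adjacent hij
  have hne : i ≠ j := by
    rintro rfl
    omega
  by_cases hi : k = i
  · subst hi
    simp only [map_sub, eOp_fOp, map_add, map_smul, hcartan, cartan_self, if_true, hne, if_false,
      neg_neg, zpow_neg, zpow_ofNat]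
    match_scalars <;> field_simp <;> ring
  by_cases hj : k = j
  · subst hj
    simp only [map_sub, eOp_fOp, map_add, map_smul, cartan_comm k i, hcartan, cartan_self, if_true,
      hne.symm, if_false, neg_neg, zpow_neg, zpow_ofNat]
    match_scalars <;> field_simp <;> ring
  simp only [map_sub, eOp_fOp, map_add, map_smul, hi, hj, if_false]
  match_scalars <;> ring

/-- The action of the generator `B_i` on functions of words. -/
def bOp (q : K) (i : Fin n) : WordFun K n →ₗ[K] WordFun K n := fOp q i + (1 - q ^ 2)⁻¹ • eOp K i

lemma bOp_apply (q : K) (i : Fin n) (x : WordFun K n) :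
    bOp q i x = fOp q i x + (1 - q ^ 2)⁻¹ • eOp K i x := rfl

lemma bOp_comm {q : K} {i j : Fin n} (hij : (i : ℕ) + 1 < j) {x : WordFun K n}
    (hx : x ∈ serreSubmodule n q) : bOp q i (bOp q j x) = bOp q j (bOp q i x) := by
  have hne : i ≠ j := Fin.ne_of_lt (Fin.lt_def.2 (by omega))
  simp only [bOp_apply, map_add, map_smul, eOp_fOp, cartan_comm j i, cartan_distant hij,
    eOp_comm hx hij, fOp_comm q hij, hne, hne.symm, if_false]
  match_scalars <;> simp

/-- Expanding the cubic relation in `f + (1 - q²)⁻¹ e`, the `f`-cubic and `e`-cubic parts vanish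
and the mixed part is a multiple of `B_j` by the `q`-boson relation `eOp_fOp`. -/
lemma bOp_serre {q : K} (hq : q ≠ 0) (hq2 : 1 - q ^ 2 ≠ 0) {i j : Fin n}
    (hij : (i : ℕ) + 1 = j ∨ (j : ℕ) + 1 = i) {x : WordFun K n} (hx : x ∈ serreSubmodule n q) :
    bOp q i (bOp q i (bOp q j x)) + bOp q j (bOp q i (bOp q i x)) =
      (q + q⁻¹) • bOp q i (bOp q j (bOp q i x)) + bOp q j x := by
  have hne : i ≠ j := by
    rintro rfl
    omega
  simp only [bOp_apply, map_add, map_smul, eOp_fOp, cartan_comm j i, cartan_adjacent hij,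
    cartan_self, eOp_serre hx hij, fOp_serre hq hij, hne, hne.symm, if_false, if_true, smul_add,
    smul_sub, neg_neg, zpow_neg, zpow_ofNat]
  match_scalars <;> field_simp <;> ring

lemma bOp_mem_serreSubmodule {q : K} (hq : q ≠ 0) (i : Fin n) {x : WordFun K n}
    (hx : x ∈ serreSubmodule n q) : bOp q i x ∈ serreSubmodule n q :=
  add_mem (shuffle_mem_serreSubmodule hq (wordSingle_mem_serreSubmodule (List.isChain_singleton i))
    hx) (Submodule.smul_mem _ _ (eOp_mem_serreSubmodule hx i))

/-- Only the `e`-parts of the operators contribute, since the `f`-parts lengthen words. -/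
lemma foldl_bOp_nil (q : K) {w : List (Fin n)} {x : WordFun K n}
    (hx : ∀ u, u.length < w.length → x u = 0) :
    w.foldl (fun y k => bOp q k y) x [] = (1 - q ^ 2)⁻¹ ^ w.length * x w := by
  induction w generalizing x with
  | nil => simp
  | cons k w ih =>
    have hf (u : List (Fin n)) (hu : u.length ≤ w.length) : fOp q k x u = 0 := by
      by_contra hne
      obtain ⟨v, hv, hs⟩ := exists_shuf_of_wordSingle_shuffle_ne_zero hne
      refine hv (hx v ?_)
      rw [hs.length_eq, List.length_singleton] at hu
      rw [List.length_cons]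
      omega
    have hb (u : List (Fin n)) (hu : u.length ≤ w.length) :
        bOp q k x u = (1 - q ^ 2)⁻¹ * x (k :: u) := by
      rw [bOp_apply, Pi.add_apply, hf u hu, zero_add, Pi.smul_apply, smul_eq_mul, eOp_apply]
    rw [List.foldl_cons, ih fun u hu => ?_, hb w le_rfl, List.length_cons,
      pow_succ (1 - q ^ 2)⁻¹, mul_assoc]
    rw [hb u hu.le, hx _ (by simpa using hu), mul_zero]

/-- The shuffle product of the indicator functions of the words in a list. -/
def shuffleProd (q : K) (L : List (List (Fin n))) : WordFun K n :=
  L.foldr (fun l x => shuffle q (wordSingle K l) x) (wordSingle K [])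

lemma shuffleProd_mem_serreSubmodule {q : K} (hq : q ≠ 0) {L : List (List (Fin n))}
    (hL : ∀ l ∈ L, l.IsChain Nxt) : shuffleProd q L ∈ serreSubmodule n q := by
  induction L with
  | nil => exact wordSingle_mem_serreSubmodule List.isChain_nil
  | cons l L ih =>
    rw [List.forall_mem_cons] at hL
    exact shuffle_mem_serreSubmodule hq (wordSingle_mem_serreSubmodule hL.1) (ih hL.2)

end Shuffle

/-! ### Lexicographically largest shuffles -/

section LexShuffle

variable {α : Type*} [LinearOrder α]

lemma nil_le_word (a : List α) : [] ≤ a := not_lt.1 (List.not_lt_nil a)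

lemma cons_le_cons_iff_word {k c : α} {s a : List α} : k :: s ≤ c :: a ↔ k < c ∨ k = c ∧ s ≤ a := by
  rw [← not_lt, List.not_lt, List.cons_le_cons_iff, ← List.not_lt, not_lt]

lemma append_le_append_left_word (p : List α) {a b : List α} (h : a ≤ b) : p ++ a ≤ p ++ b := by
  induction p with
  | nil => exact h
  | cons k p ih => exact List.cons_le_cons k ih

lemma le_append_word (s r : List α) : s ≤ s ++ r := by
  simpa using append_le_append_left_word s (nil_le_word r)

lemma isPrefix_or_append_lt_append {s a : List α} (h : s ≤ a) :
    s <+: a ∨ ∀ u v, s ++ u < a ++ v := by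
  induction s generalizing a with
  | nil => exact Or.inl List.nil_prefix
  | cons k s ih =>
    cases a with
    | nil => exact absurd (List.Lex.nil : [] < k :: s) (not_lt.2 h)
    | cons c a =>
      rcases cons_le_cons_iff_word.1 h with hlt | ⟨rfl, hle⟩
      · exact Or.inr fun u v => List.Lex.rel hlt
      · rcases ih hle with hpre | hlt
        · exact Or.inl (List.cons_prefix_cons.2 ⟨rfl, hpre⟩)
        · exact Or.inr fun u v => List.Lex.cons (hlt u v)

lemma append_append_le_of_le {s a : List α} (ha : a.IsChain (· < ·)) (h : s ≤ a) (r : List α) :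
    s ++ (a ++ r) ≤ a ++ (s ++ r) := by
  rcases isPrefix_or_append_lt_append h with ⟨t, rfl⟩ | hlt
  · rw [List.append_assoc, List.append_assoc]
    refine append_le_append_left_word s ?_
    cases s with
    | nil => exact le_rfl
    | cons k s =>
      cases t with
      | nil => exact le_rfl
      | cons c t => exact le_of_lt (List.Lex.rel (ha.rel_cons (by simp)))
  · exact (hlt _ _).le

lemma le_tail_of_le_cons {x l : List α} {c : α} (hl : (c :: l).IsChain (· < ·)) (h₀ : l ≠ [])
    (hx : x ≤ c :: l) : x ≤ l := by
  obtain ⟨d, l, rfl⟩ := List.exists_cons_of_ne_nil h₀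
  cases x with
  | nil => exact nil_le_word _
  | cons k x =>
    have hkc : k ≤ c := by
      rcases cons_le_cons_iff_word.1 hx with h | h
      exacts [h.le, h.1.le]
    exact cons_le_cons_iff_word.2 (Or.inl (hkc.trans_lt (hl.rel_cons List.mem_cons_self)))

namespace Shuf

lemma exists_le_of_le {l v v' w : List α} (h : Shuf l v w) (hv : v ≤ v') :
    ∃ w', Shuf l v' w' ∧ w ≤ w' := by
  induction h generalizing v' with
  | nil => exact ⟨v', nil_left v', hv⟩
  | left k _ ih =>
    obtain ⟨w', hs, hle⟩ := ih hv
    exact ⟨k :: w', .left k hs, List.cons_le_cons k hle⟩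
  | @right u v w k _ ih =>
    cases v' with
    | nil => exact absurd (List.Lex.nil : [] < k :: v) (not_lt.2 hv)
    | cons c v' =>
      rcases cons_le_cons_iff_word.1 hv with hlt | ⟨rfl, hle⟩
      · exact ⟨c :: (u ++ v'), .right c (append u v'), le_of_lt (List.Lex.rel hlt)⟩
      · obtain ⟨w', hs, hle'⟩ := ih hle
        exact ⟨k :: w', .right k hs, List.cons_le_cons k hle'⟩

lemma exists_le_append {c : α} {l t v w : List α} (ht : ∀ d ∈ t, c < d)
    (h : Shuf (c :: l) (t ++ v) w) : ∃ w', Shuf (c :: l) v w' ∧ w ≤ t ++ w' := by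
  induction t generalizing w with
  | nil => exact ⟨w, h, le_rfl⟩
  | cons d t ih =>
    rw [List.forall_mem_cons] at ht
    cases h with
    | left =>
      exact ⟨c :: l ++ v, append _ _, le_of_lt (List.Lex.rel ht.1)⟩
    | right _ h =>
      obtain ⟨w', hs, hle⟩ := ih ht.2 h
      exact ⟨w', hs, List.cons_le_cons d hle⟩

lemma le_append_flatten {l w : List α} {L : List (List α)} (hl : l.IsChain (· < ·))
    (hL : ∀ x ∈ L, x.IsChain (· < ·)) (hle : ∀ x ∈ L, x ≤ l) (h : Shuf l L.flatten w) :
    w ≤ l ++ L.flatten := by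
  induction L generalizing l w with
  | nil => exact (by simpa using h.eq_of_nil_right.le)
  | cons a L ihL =>
    rw [List.flatten_cons] at h ⊢
    induction l generalizing w with
    | nil => exact h.eq_of_nil_left.le
    | cons c l ihl =>
      have hL' := (List.forall_mem_cons.1 hL).2
      have hle' := (List.forall_mem_cons.1 hle).2
      cases a with
      | nil => exact ihL hl hL' hle' h
      | cons k t =>
        cases h with
        | left _ h =>
          refine List.cons_le_cons c ?_
          rcases eq_or_ne l [] with rfl | h₀
          · exact h.eq_of_nil_left.le
          · exact ihl hl.tail (fun x hx => le_tail_of_le_cons hl h₀ (hle x hx)) h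
        | right _ h =>
          rcases cons_le_cons_iff_word.1 (hle _ List.mem_cons_self) with hkc | ⟨rfl, -⟩
          · exact le_of_lt (List.Lex.rel hkc)
          · have hkt := (hL _ List.mem_cons_self)
            obtain ⟨w', hs, hw⟩ := exists_le_append (fun d hd => hkt.rel_cons hd) h
            exact (List.cons_le_cons k (hw.trans (append_le_append_left_word t
              (ihL hl hL' hle' hs)))).trans
              (append_append_le_of_le hl (hle _ List.mem_cons_self) L.flatten)

end Shuf

end LexShuffle

section Support

variable {K : Type*} [Field K] {n : ℕ}

lemma length_eq_and_le_of_shuffleProd_ne_zero {q : K} {L : List (List (Fin n))}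
    (hL : ∀ l ∈ L, l.IsChain (· < ·)) (hpw : L.Pairwise (· ≥ ·)) {w : List (Fin n)}
    (h : shuffleProd q L w ≠ 0) : w.length = L.flatten.length ∧ w ≤ L.flatten := by
  induction L generalizing w with
  | nil =>
    obtain rfl : w = [] := by
      by_contra hw
      exact h (by simp [shuffleProd, wordSingle_apply, hw])
    exact ⟨rfl, le_rfl⟩
  | cons l L ih =>
    rw [List.forall_mem_cons] at hL
    rw [List.pairwise_cons] at hpw
    obtain ⟨v, hv, hs⟩ := exists_shuf_of_wordSingle_shuffle_ne_zero h
    obtain ⟨hlen, hle⟩ := ih hL.2 hpw.2 hv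
    obtain ⟨w', hs', hw⟩ := hs.exists_le_of_le hle
    rw [List.flatten_cons, List.length_append, hs.length_eq, hlen]
    exact ⟨rfl, hw.trans (hs'.le_append_flatten hL.1 hL.2 hpw.1)⟩

end Support

section Positivity

variable {K : Type*} [Field K] [LinearOrder K] [IsStrictOrderedRing K] {n : ℕ} {q : K}
  {x y : WordFun K n}

lemma kOp_nonneg (hq : 0 < q) (hx : 0 ≤ x) (k : Fin n) : 0 ≤ kOp q k x := fun w =>
  mul_nonneg (zpow_pos hq _).le (hx w)

lemma shuffle_nonneg (hq : 0 < q) (hx : 0 ≤ x) (hy : 0 ≤ y) : 0 ≤ shuffle q x y := by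
  intro w
  induction w generalizing x y with
  | nil => exact mul_nonneg (hx []) (hy [])
  | cons k w ih =>
    exact add_nonneg (ih (fun u => hx (k :: u)) hy) (ih (kOp_nonneg hq hx k) (fun u => hy (k :: u)))

lemma shuffle_pos_of_nil_pos (hq : 0 < q) (hx : 0 ≤ x) (hy : 0 ≤ y) (hx₀ : 0 < x [])
    {v : List (Fin n)} (hv : 0 < y v) : 0 < shuffle q x y v := by
  induction v generalizing x y with
  | nil => exact mul_pos hx₀ hv
  | cons k v ih =>
    exact add_pos_of_nonneg_of_pos (shuffle_nonneg hq (fun u => hx (k :: u)) hy v)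
      (ih (kOp_nonneg hq hx k) (fun u => hy (k :: u)) (mul_pos (zpow_pos hq _) hx₀) hv)

lemma shuffle_pos (hq : 0 < q) (hx : 0 ≤ x) (hy : 0 ≤ y) {u v : List (Fin n)} (hu : 0 < x u)
    (hv : 0 < y v) : 0 < shuffle q x y (u ++ v) := by
  induction u generalizing x with
  | nil => exact shuffle_pos_of_nil_pos hq hx hy hu hv
  | cons k u ih =>
    exact add_pos_of_pos_of_nonneg (ih (fun u => hx (k :: u)) hu)
      (shuffle_nonneg hq (kOp_nonneg hq hx k) (fun u => hy (k :: u)) _)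

lemma wordSingle_nonneg (l : List (Fin n)) : 0 ≤ wordSingle K l := by
  intro w
  rw [wordSingle_apply]
  split_ifs
  exacts [zero_le_one, le_rfl]

lemma wordSingle_self_pos (l : List (Fin n)) : 0 < wordSingle K l l := by
  simp [wordSingle_apply]

lemma shuffleProd_nonneg (hq : 0 < q) (L : List (List (Fin n))) : 0 ≤ shuffleProd q L := by
  induction L with
  | nil => exact wordSingle_nonneg []
  | cons l L ih => exact shuffle_nonneg hq (wordSingle_nonneg l) ih

lemma shuffleProd_flatten_pos (hq : 0 < q) (L : List (List (Fin n))) :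
    0 < shuffleProd q L L.flatten := by
  induction L with
  | nil => exact wordSingle_self_pos (K := K) (n := n) []
  | cons l L ih =>
    exact shuffle_pos hq (wordSingle_nonneg l) (shuffleProd_nonneg hq L) (wordSingle_self_pos l) ih

end Positivity

section Representation

variable {K : Type u} [Field K] {R : Type*} [Ring R] [Algebra K R] {n : ℕ} {q : K} {b : Fin n → R}

/-- The restriction of `bOp q i` to the functions killing the `q`-Serre relations. -/
def bOpSerre (hq : q ≠ 0) (i : Fin n) : Module.End K (serreSubmodule n q) :=
  (bOp q i).restrict fun _ hx => bOp_mem_serreSubmodule hq i hx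

lemma coe_bOpSerre (hq : q ≠ 0) (i : Fin n) (x : serreSubmodule n q) :
    (bOpSerre hq i x : WordFun K n) = bOp q i x := rfl

lemma uiRelations_op_bOpSerre (hq : q ≠ 0) (hq2 : 1 - q ^ 2 ≠ 0) :
    UiRelations (q + q⁻¹) fun i : Fin n => MulOpposite.op (bOpSerre hq i) where
  comm i j hij := by
    refine MulOpposite.unop_injective (LinearMap.ext fun x => Subtype.ext ?_)
    exact (bOp_comm hij x.2).symm
  serre i j hij := by
    refine MulOpposite.unop_injective (LinearMap.ext fun x => Subtype.ext ?_)
    simp only [MulOpposite.unop_mul, MulOpposite.unop_op, MulOpposite.unop_add,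
      MulOpposite.unop_smul, LinearMap.add_apply, LinearMap.smul_apply, Module.End.mul_apply,
      Submodule.coe_add, Submodule.coe_smul, coe_bOpSerre]
    rw [← bOp_serre hq hq2 hij x.2, add_comm]

/-- `R` is the split ıquantum group of type `A_n` over `K` at the parameter `q`, with generators
`b i`, in the form of the universal property of its presentation. The uniqueness of the
homomorphism is left out. -/
structure IsUi (q : K) (b : Fin n → R) : Prop where
  relations : UiRelations (q + q⁻¹) b
  exists_lift (A : Type u) [Ring A] [Algebra K A] (b' : Fin n → A) :
    UiRelations (q + q⁻¹) b' → ∃ Φ : R →ₐ[K] A, ∀ i, Φ (b i) = b' i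

namespace IsUi

lemma exists_functional (h : IsUi q b) (hq : q ≠ 0) (hq2 : 1 - q ^ 2 ≠ 0) {x : WordFun K n}
    (hx : x ∈ serreSubmodule n q) :
    ∃ φ : R →ₗ[K] K, ∀ w, φ (Bword b w) = w.foldl (fun y k => bOp q k y) x [] := by
  obtain ⟨Φ, hΦ⟩ := h.exists_lift _ _ (uiRelations_op_bOpSerre hq hq2)
  have hact (w : List (Fin n)) (z : serreSubmodule n q) :
      ((Φ (Bword b w)).unop z : WordFun K n) = w.foldl (fun y k => bOp q k y) z := by
    induction w generalizing z with
    | nil => simp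
    | cons k w ih =>
      rw [Bword_cons, map_mul, MulOpposite.unop_mul, Module.End.mul_apply, ih, hΦ,
        MulOpposite.unop_op, coe_bOpSerre, List.foldl_cons]
  let φ : R →ₗ[K] K :=
    { toFun := fun r => ((Φ r).unop ⟨x, hx⟩ : WordFun K n) []
      map_add' := fun r s => by simp
      map_smul' := fun c r => by simp }
  exact ⟨φ, fun w => congrFun (hact w ⟨x, hx⟩) []⟩

/-- The functional attached to the shuffle product of the words in `L` vanishes on `B_w` for
`w ≺ L.flatten`, but not on `B_w` for `w = L.flatten`. -/
theorem isGood_flatten [LinearOrder K] [IsStrictOrderedRing K] (h : IsUi q b) (hq : 0 < q)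
    (hq1 : q ≠ 1) {L : List (List (Fin n))} (hL : ∀ l ∈ L, l.IsChain Nxt)
    (hc : L.IsChain fun a b => ¬ LexLt a b) : IsGood K b L.flatten := by
  have hq2 : 1 - q ^ 2 ≠ 0 := fun h =>
    hq1 ((pow_eq_one_iff_of_nonneg hq.le two_ne_zero).1 (sub_eq_zero.1 h).symm)
  have hpw : L.Pairwise (· ≥ ·) :=
    List.IsChain.pairwise (hc.imp fun a b h => (not_lt.1 h : a ≥ b))
  have hsupp {w : List (Fin n)} (hw : shuffleProd q L w ≠ 0) :=
    length_eq_and_le_of_shuffleProd_ne_zero (fun l hl => (hL l hl).imp fun _ _ => Nxt.lt) hpw hw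
  obtain ⟨φ, hφ⟩ := h.exists_functional hq.ne' hq2 (shuffleProd_mem_serreSubmodule hq.ne' hL)
  have hφ' {w : List (Fin n)} (hw : w.length ≤ L.flatten.length) :
      φ (Bword b w) = (1 - q ^ 2)⁻¹ ^ w.length * shuffleProd q L w := by
    rw [hφ, foldl_bOp_nil]
    intro u hu
    by_contra hne
    exact (hu.trans_le hw).ne (hsupp hne).1
  have hker : Submodule.span K (Bword b '' {w | PrecLt w L.flatten}) ≤ LinearMap.ker φ := by
    refine Submodule.span_le.2 ?_
    rintro _ ⟨w, hw, rfl⟩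
    rw [SetLike.mem_coe, LinearMap.mem_ker, hφ' (hw.elim le_of_lt fun h => h.1.le)]
    refine mul_eq_zero_of_right _ ?_
    by_contra hne
    rcases hw with hlt | ⟨-, hlt⟩
    · exact hlt.ne (hsupp hne).1
    · exact not_lt.2 (hsupp hne).2 hlt
  intro hmem
  have hzero := LinearMap.mem_ker.1 (hker hmem)
  rw [hφ' le_rfl] at hzero
  exact mul_ne_zero (pow_ne_zero _ (inv_ne_zero hq2)) (shuffleProd_flatten_pos hq L).ne' hzero

end IsUi

end Representation

/-! ### Lyndon words -/

section Lyndon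

variable {n : ℕ}

lemma isLyndon_of_isSegment {l : List (Fin n)} (h : IsSegment l) : IsLyndon l := by
  refine ⟨h.1, fun k hk hkl => ?_⟩
  obtain ⟨a, s, rfl⟩ := List.exists_cons_of_ne_nil h.1
  obtain ⟨k, rfl⟩ := Nat.exists_eq_succ_of_ne_zero hk.ne'
  have hks : k < s.length := by simpa using hkl
  rw [List.drop_succ_cons, List.drop_eq_getElem_cons hks]
  exact List.Lex.rel (Nxt.lt_of_mem h.2 (List.getElem_mem hks))

/-- The last of several factors would be a proper suffix not exceeding the first factor. -/
lemma exists_eq_singleton_of_isLyndon_flatten {L : List (List (Fin n))} (hL : ∀ l ∈ L, l ≠ [])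
    (hpw : L.Pairwise (· ≥ ·)) (h : IsLyndon L.flatten) : ∃ l, L = [l] := by
  cases L with
  | nil => exact absurd rfl h.1
  | cons s L =>
    rcases List.eq_nil_or_concat L with rfl | ⟨M, t, rfl⟩
    · exact ⟨s, rfl⟩
    · exfalso
      have hs := List.length_pos_iff.2 (hL s (by simp))
      have ht := List.length_pos_iff.2 (hL t (by simp))
      have hts : t ≤ s := List.rel_of_pairwise_cons hpw (by simp)
      have hflat : (s :: (M ++ [t])).flatten = s ++ M.flatten ++ t := by simp
      rw [List.concat_eq_append, hflat] at h
      have hlt : s ++ M.flatten ++ t < t := by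
        have := h.2 (s ++ M.flatten).length (by rw [List.length_append]; omega)
          (by rw [List.length_append (bs := t)]; omega)
        rwa [List.drop_left] at this
      rw [List.append_assoc] at hlt
      exact absurd (hlt.trans_le hts) (not_lt.2 (le_append_word s _))

end Lyndon

theorem good_words_of_Ui_general {K : Type u} [Field K] [LinearOrder K] [IsStrictOrderedRing K]
    {R : Type*} [Ring R] [Algebra K R] {n : ℕ} {q : K} {b : Fin n → R} (hq : 0 < q) (hq1 : q ≠ 1)
    (h : IsUi q b) (g : List (Fin n)) :
    (IsGood K b g ↔
      ∃ L : List (List (Fin n)), (∀ l ∈ L, IsSegment l) ∧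
        L.IsChain (fun a b => ¬ LexLt a b) ∧ g = L.flatten) ∧
    (∀ l : List (Fin n), (IsLyndon l ∧ IsGood K b l) ↔ IsSegment l) := by
  have hfactor {l : List (Fin n)} (hl : IsGood K b l) :=
    h.relations.exists_segments_of_isGood (add_pos hq (inv_pos.2 hq)).ne' hl
  refine ⟨⟨hfactor, ?_⟩, fun l => ⟨?_, fun hl => ⟨isLyndon_of_isSegment hl, ?_⟩⟩⟩
  · rintro ⟨L, hL, hc, rfl⟩
    exact h.isGood_flatten hq hq1 (fun l hl => (hL l hl).2) hc
  · rintro ⟨hlyn, hgood⟩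
    obtain ⟨L, hL, hc, rfl⟩ := hfactor hgood
    have hpw : L.Pairwise (· ≥ ·) :=
      List.IsChain.pairwise (hc.imp fun a b h => (not_lt.1 h : a ≥ b))
    obtain ⟨s, rfl⟩ :=
      exists_eq_singleton_of_isLyndon_flatten (fun l hl => (hL l hl).1) hpw hlyn
    simpa using hL
  · simpa using h.isGood_flatten hq hq1 (L := [l]) (List.forall_mem_singleton.2 hl.2)
      (List.isChain_singleton l)

/-! ### The quotient presentation and an ordering of `ℚ(q)` -/

theorem isUi_Bgen (n : ℕ) : IsUi (RatFunc.X : RatFunc ℚ) (Bgen n) where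
  relations :=
    { comm i j hij := by
        simpa only [map_mul, Bgen] using RingQuot.mkAlgHom_rel (RatFunc ℚ) (UiRel.comm i j hij)
      serre i j hij := by
        simpa only [map_mul, map_add, map_smul, Bgen] using
          RingQuot.mkAlgHom_rel (RatFunc ℚ) (UiRel.serre i j hij) }
  exists_lift A _ _ b' h := by
    have hrel ⦃x y⦄ (hxy : UiRel n x y) :
        FreeAlgebra.lift (RatFunc ℚ) b' x = FreeAlgebra.lift (RatFunc ℚ) b' y := by
      cases hxy with
      | comm i j hij => simpa only [map_mul, FreeAlgebra.lift_ι_apply] using h.comm i j hij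
      | serre i j hij =>
        simpa only [map_mul, map_add, map_smul, FreeAlgebra.lift_ι_apply] using h.serre i j hij
    exact ⟨RingQuot.liftAlgHom (RatFunc ℚ) ⟨FreeAlgebra.lift (RatFunc ℚ) b', hrel⟩, fun i => by
      rw [Bgen, RingQuot.liftAlgHom_mkAlgHom_apply, FreeAlgebra.lift_ι_apply]⟩

/-- The ordering is pulled back along the embedding `X ↦ t`. -/
lemma exists_linearOrder_ratFunc {F E : Type*} [Field F] [Field E] [LinearOrder E]
    [IsStrictOrderedRing E] [Algebra F E] {t : E} (ht : Transcendental F t) (ht₀ : 0 < t) :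
    ∃ _ : LinearOrder (RatFunc F),
      IsStrictOrderedRing (RatFunc F) ∧ 0 < (RatFunc.X : RatFunc F) := by
  let f : RatFunc F →ₐ[F] E :=
    (IntermediateField.val _).comp (RatFunc.algEquivOfTranscendental t ht).toAlgHom
  have hX : f RatFunc.X = t := by simp [f]
  let ord : LinearOrder (RatFunc F) := LinearOrder.lift' f f.injective
  refine ⟨ord, Function.Injective.isStrictOrderedRing f (map_zero f) (map_one f) (map_add f)
    (map_mul f) Iff.rfl Iff.rfl, ?_⟩
  change f 0 < f RatFunc.X
  rwa [map_zero, hX]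

lemma exists_pos_transcendental_rat : ∃ t : ℝ, 0 < t ∧ Transcendental ℚ t := by
  refine ⟨liouvilleNumber (2 : ℕ), ?_, ?_⟩
  · exact (LiouvilleNumber.summable (by norm_num)).tsum_pos (fun i => by positivity) 0
      (by positivity)
  · exact (IsFractionRing.isAlgebraic_iff ℤ ℚ ℝ).not.1 (transcendental_liouvilleNumber le_rfl)

/-- A word is good for `U^ı(sl_{n+1})` iff it is a lexicographically nonincreasing concatenation
of segments `v_a v_{a+1} ⋯ v_b`; in particular the good Lyndon words are exactly the
segments. -/
theorem good_words_of_Ui {n : ℕ} (g : List (Fin n)) :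
    (IsGood (RatFunc ℚ) (Bgen n) g ↔
      ∃ L : List (List (Fin n)), (∀ l ∈ L, IsSegment l) ∧
        L.Chain' (fun a b => ¬ LexLt a b) ∧ g = L.flatten) ∧
    (∀ l : List (Fin n), (IsLyndon l ∧ IsGood (RatFunc ℚ) (Bgen n) l) ↔ IsSegment l) := by
  obtain ⟨t, ht₀, ht⟩ := exists_pos_transcendental_rat
  obtain ⟨_, _, hX⟩ := exists_linearOrder_ratFunc ht ht₀
  have hX1 : (RatFunc.X : RatFunc ℚ) ≠ 1 := fun h => by simpa using congrArg RatFunc.intDegree h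
  exact good_words_of_Ui_general hX hX1 (isUi_Bgen n) g
end
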